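/- Let X = A_2 be embedded in Y = D_4 via the 28-dimensional irreducible (adjoint) representation of highest weight δ = ω_1 + ω_2 = (1,1). Let λ be a dominant weight for Y with λ ∉ {0, λ_1, λ_3, λ_4}. Then, up to a twist by an automorphism of D_4 (triality), V_Y(λ)↓X is multiplicity-free if and only if λ = λ_2, λ_1+λ_4, or cλ_1 with 1 ≤ c ≤ 5. -/

import Mathlib

/-!
# Common framework

Over an algebraically closed field of characteristic zero, finite–dimensional rational
representations of a simple algebraic group are semisimple and are determined by their
formal characters, i.e. by elements of the group ring of the (rational) weight lattice;
the character of the irreducible module of highest weight `λ` is pinned down by the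
Weyl character formula `A_ρ · χ_λ = A_{λ+ρ}`.

Below we model, completely combinatorially:

* type `A_r` : weights are realised by their traceless representatives in `Fin (r+1) → ℚ`
  (the `gl`-coordinates), and the Weyl group is the symmetric group;
* types `B_n, C_n, D_n` : weights are realised in the standard `ε`-coordinates
  `Fin n → ℚ`, and the Weyl group consists of (signed) permutations, with evenly many
  sign changes in type `D`;
* an embedding `X = A_r < Y` (classical of type `t` and rank `n`) in which `X` acts on
  the natural module `W` of `Y` irreducibly with highest weight `δ` : the weights of `W`
  are `± w i` (plus one zero weight in type `B`), and restriction of characters is induced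
  by the map `v ↦ ∑ i, v i • w i` of weight lattices;
* `IsMFRes t n r δ lam` : the restriction to `X` of the irreducible `Y`-module with
  highest weight `lam` is multiplicity-free, i.e. its character is a sum of distinct
  irreducible characters of `X`.

Dominant weights are always recorded by their (natural number) coordinates in the basis
of fundamental weights, `e n k` being the `k`-th fundamental weight (1-indexed).
-/

noncomputable section

namespace MFPaper

/-- The Dynkin type of a classical group `B_n = SO_{2n+1}`, `C_n = Sp_{2n}`, `D_n = SO_{2n}`. -/
inductive CType | B | C | D
deriving DecidableEq

/-- The character ring: the integral group ring of a rational weight space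
with `k` coordinates. -/
abbrev CharRing (k : ℕ) : Type := AddMonoidAlgebra ℤ (Fin k → ℚ)

/-- The formal exponential `e^v` of a weight `v`. -/
def mono {k : ℕ} (v : Fin k → ℚ) : CharRing k := AddMonoidAlgebra.single v 1

/-- `e n k` : the `k`-th fundamental dominant weight (`1 ≤ k ≤ n`, 1-indexed) of a rank `n`
group, recorded by its coordinates in the basis of fundamental weights. -/
def e (n k : ℕ) : Fin n → ℕ := fun i => if (i : ℕ) + 1 = k then 1 else 0

/-! ### Type `A_r` -/

/-- The partition (`gl`) lift of the dominant weight of `A_r` with coordinates `d`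
in the basis of fundamental weights. -/
def partLift (r : ℕ) (d : Fin r → ℕ) : Fin (r + 1) → ℚ := fun i =>
  ∑ j ∈ Finset.univ.filter (fun j : Fin r => (i : ℕ) ≤ (j : ℕ)), (d j : ℚ)

/-- The traceless (`sl`) representative of the dominant weight of `A_r` with coordinates `d`. -/
def slWt (r : ℕ) (d : Fin r → ℕ) : Fin (r + 1) → ℚ := fun i =>
  partLift r d i - (∑ j : Fin r, (((j : ℕ) : ℚ) + 1) * (d j : ℚ)) / (r + 1)

/-- A lift of the half-sum of the positive roots of `A_r`. -/
def rhoA (r : ℕ) : Fin (r + 1) → ℚ := fun i => (r : ℚ) - (i : ℕ)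

/-- The Weyl alternating sum `A_v = ∑_{σ} sgn(σ) e^{σ v}` for type `A_r`. -/
def altA (r : ℕ) (v : Fin (r + 1) → ℚ) : CharRing (r + 1) :=
  ∑ σ : Equiv.Perm (Fin (r + 1)),
    ((Equiv.Perm.sign σ : ℤˣ) : ℤ) • mono (fun i => v (σ i))

/-- `IsCharA r d f` : `f` is the formal character of the irreducible `A_r`-module
of highest weight `d` (Weyl character formula). -/
def IsCharA (r : ℕ) (d : Fin r → ℕ) (f : CharRing (r + 1)) : Prop :=
  altA r (rhoA r) * f = altA r (slWt r d + rhoA r)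

/-- `Decomp r F c` : the character `F` of a representation of `A_r` decomposes as
`∑_μ (c μ) · χ_μ`, i.e. the irreducible of highest weight `μ` occurs in it as a
composition factor with multiplicity `c μ`. -/
def Decomp (r : ℕ) (F : CharRing (r + 1)) (c : (Fin r → ℕ) →₀ ℕ) : Prop :=
  F * altA r (rhoA r) = c.sum fun μ k => (k : ℤ) • altA r (slWt r μ + rhoA r)

/-- The Weyl dimension formula for type `A_r`. -/
def dimA (r : ℕ) (d : Fin r → ℕ) : ℚ :=
  ∏ p ∈ Finset.univ.filter (fun p : Fin (r + 1) × Fin (r + 1) => (p.1 : ℕ) < (p.2 : ℕ)),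
    ((partLift r d p.1 - partLift r d p.2 + ((p.2 : ℕ) : ℚ) - ((p.1 : ℕ) : ℚ)) /
      (((p.2 : ℕ) : ℚ) - ((p.1 : ℕ) : ℚ)))

/-- The self-dual irreducible `A_r`-module of highest weight `d` is *symplectic*
(it carries an invariant alternating form); by Steinberg's criterion this happens
exactly when `⟨d, 2ρ^∨⟩ = ∑ d_k · k(r+1-k)` is odd. -/
def IsSympWt (r : ℕ) (d : Fin r → ℕ) : Prop :=
  Odd (∑ i : Fin r, d i * ((i : ℕ) + 1) * (r - (i : ℕ)))

/-! ### The classical types `B`, `C`, `D` -/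

/-- Convenient access to the `k`-th (0-indexed) coordinate. -/
def cval {n : ℕ} (c : Fin n → ℕ) (k : ℕ) : ℚ := if h : k < n then (c ⟨k, h⟩ : ℚ) else 0

/-- `ε`-coordinates of the dominant weight of the classical group of type `t` and rank `n`
with coordinates `c` in the basis of fundamental weights (Bourbaki numbering). -/
def epsWt (t : CType) (n : ℕ) (c : Fin n → ℕ) : Fin n → ℚ := fun i =>
  (∑ k ∈ Finset.univ.filter (fun k : Fin n => (i : ℕ) ≤ (k : ℕ)), (c k : ℚ)) -
    (match t with
      | .C => 0
      | .B => cval c (n - 1) / 2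
      | .D => (cval c (n - 2) + cval c (n - 1)) / 2)

/-- The half-sum of the positive roots in `ε`-coordinates. -/
def rhoY (t : CType) (n : ℕ) : Fin n → ℚ := fun i =>
  match t with
  | .C => (n : ℚ) - (i : ℕ)
  | .B => (n : ℚ) - (i : ℕ) - 1 / 2
  | .D => (n : ℚ) - 1 - (i : ℕ)

/-- The Weyl alternating sum for the classical group of type `t` and rank `n`:
the Weyl group consists of the signed permutations of the coordinates,
with evenly many sign changes in type `D`. -/
def altY (t : CType) (n : ℕ) (v : Fin n → ℚ) : CharRing n :=
  ∑ σ : Equiv.Perm (Fin n), ∑ s : Fin n → Bool,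
    if t = CType.D ∧ ¬ Even (Finset.univ.filter (fun i => s i = true)).card then 0
    else (((Equiv.Perm.sign σ : ℤˣ) : ℤ) *
          (-1) ^ (Finset.univ.filter (fun i => s i = true)).card) •
      mono (fun i => (if s i then -1 else 1) * v (σ i))

/-- `IsCharY t n c f` : `f` is the formal character of the irreducible module of highest
weight `c` for the classical group of type `t` and rank `n` (Weyl character formula). -/
def IsCharY (t : CType) (n : ℕ) (c : Fin n → ℕ) (f : CharRing n) : Prop :=
  altY t n (rhoY t n) * f = altY t n (epsWt t n c + rhoY t n)

/-! ### The embedding `X = A_r < Y` via `δ`, and restriction of characters -/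

/-- `WtSys t n r δ w` : `w` lists "half" of the weights of the natural module
`W = V_X(δ)` of the classical group `Y` of type `t` and rank `n`, for `X = A_r`:
the weights of `W` (with multiplicity) are exactly the `± w i`, together with one
extra zero weight in type `B`.  Such a `w` records a maximal torus embedding
`T_X → T_Y` realising the irreducible embedding `X < Y = SO(W)` or `Sp(W)` given
by the representation of highest weight `δ`. -/
def WtSys (t : CType) (n r : ℕ) (δ : Fin r → ℕ)
    (w : Fin n → (Fin (r + 1) → ℚ)) : Prop :=
  ((∑ i : Fin n, (mono (w i) + mono (-(w i)))) +
      (if t = CType.B then mono (0 : Fin (r + 1) → ℚ) else 0)) * altA r (rhoA r)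
    = altA r (slWt r δ + rhoA r)

/-- Restriction of characters from `Y` to `X = A_r` along the torus embedding
recorded by `w`. -/
def resChar {n r : ℕ} (w : Fin n → (Fin (r + 1) → ℚ)) (F : CharRing n) :
    CharRing (r + 1) :=
  AddMonoidAlgebra.mapDomain (fun v : Fin n → ℚ => ∑ i : Fin n, v i • w i) F

/-- `IsMFRes t n r δ lam` : in the embedding `X = A_r < Y` (the classical group of type
`t` and rank `n`) given by the irreducible representation of highest weight `δ`, the
restriction to `X` of the irreducible `Y`-module of highest weight `lam` is
multiplicity-free: its character is a sum of *distinct* irreducible characters of `X`. -/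
def IsMFRes (t : CType) (n r : ℕ) (δ : Fin r → ℕ) (lam : Fin n → ℕ) : Prop :=
  ∀ w, WtSys t n r δ w → ∀ f, IsCharY t n lam f →
    ∃ c : (Fin r → ℕ) →₀ ℕ, Decomp r (resChar w f) c ∧ ∀ μ, c μ ≤ 1

/-- The operation `e^v ↦ e^{k·v}` on characters (Adams operation on the torus),
used to express symmetric and exterior powers of characters. -/
def pw {m : ℕ} (k : ℕ) (F : CharRing m) : CharRing m :=
  AddMonoidAlgebra.mapDomain (fun v : Fin m → ℚ => (k : ℚ) • v) F

/-- The irreducible `A_r`-module of highest weight `d` carries a nonzero invariant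
*symmetric* bilinear form, i.e. the trivial module occurs in its symmetric square
(whose character `S` satisfies `2S = f² + f^{[2]}`). -/
def HasSymForm (r : ℕ) (d : Fin r → ℕ) : Prop :=
  ∀ f, IsCharA r d f →
    ∃ c : (Fin r → ℕ) →₀ ℕ,
      (f * f + pw 2 f) * altA r (rhoA r)
          = c.sum (fun μ k => ((2 * k : ℕ) : ℤ) • altA r (slWt r μ + rhoA r)) ∧ 1 ≤ c 0

/-- The irreducible `A_r`-module of highest weight `d` carries a nonzero invariant
*alternating* bilinear form, i.e. the trivial module occurs in its exterior square
(whose character `Λ` satisfies `2Λ = f² - f^{[2]}`). -/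
def HasAltForm (r : ℕ) (d : Fin r → ℕ) : Prop :=
  ∀ f, IsCharA r d f →
    ∃ c : (Fin r → ℕ) →₀ ℕ,
      (f * f - pw 2 f) * altA r (rhoA r)
          = c.sum (fun μ k => ((2 * k : ℕ) : ℤ) • altA r (slWt r μ + rhoA r)) ∧ 1 ≤ c 0

end MFPaper

open MFPaper

namespace A2D4

lemma mono_mul {k : ℕ} (u v : Fin k → ℚ) : mono u * mono v = mono (u + v) := by
  simp [mono, AddMonoidAlgebra.single_mul_single]

lemma mono_zero {k : ℕ} : mono (0 : Fin k → ℚ) = 1 := rfl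

lemma mono_sum {k : ℕ} {ι : Type*} (s : Finset ι) (g : ι → Fin k → ℚ) :
    ∏ i ∈ s, mono (g i) = mono (∑ i ∈ s, g i) := by
  classical
  induction s using Finset.induction_on with
  | empty => simp [mono_zero]
  | insert a s ha ih => rw [Finset.prod_insert ha, Finset.sum_insert ha, ih, mono_mul]

lemma coeff_mono {k : ℕ} (u v : Fin k → ℚ) : (mono u).coeff v = if u = v then 1 else 0 := by
  classical
  rw [mono, AddMonoidAlgebra.coeff_single, Finsupp.single_apply]

lemma two_ne {k : ℕ} : (2 : CharRing k) ≠ 0 := by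
  intro h
  have h1 : (2 : CharRing k) = mono 0 + mono 0 := by rw [mono_zero]; norm_num
  rw [h1] at h
  have := congrArg (fun x => x.coeff 0) h
  simp [coeff_mono] at this

/-- the one-variable monomial -/
def xm (i : Fin 4) (t : ℚ) : CharRing 4 := mono (Pi.single i t)

lemma xm_mul (i : Fin 4) (s t : ℚ) : xm i s * xm i t = xm i (s + t) := by
  rw [xm, xm, xm, mono_mul, Pi.single_add]

lemma prod_xm (g : Fin 4 → ℚ) : ∏ i, xm i (g i) = mono g := by
  simp only [xm]
  rw [mono_sum, Finset.univ_sum_single]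

/-- the numerators matrices -/
def NM (z : ℤ) (v : Fin 4 → ℚ) : Matrix (Fin 4) (Fin 4) (CharRing 4) :=
  Matrix.of fun r c => xm c (v r) + z • xm c (-(v r))

lemma det_NM (z : ℤ) (v : Fin 4 → ℚ) : (NM z v).det =
    ∑ σ : Equiv.Perm (Fin 4), ∑ s : Fin 4 → Bool,
      (((Equiv.Perm.sign σ : ℤˣ) : ℤ) *
          z ^ (Finset.univ.filter (fun i => s i = true)).card) •
      mono (fun i => (if s i then -1 else 1) * v (σ i)) := by
  rw [Matrix.det_apply]
  refine Finset.sum_congr rfl fun σ _ => ?_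
  have : ∏ i, NM z v (σ i) i = ∑ s : Fin 4 → Bool,
      (z ^ (Finset.univ.filter (fun i => s i = true)).card) •
      mono (fun i => (if s i then -1 else 1) * v (σ i)) := by
    have h1 : ∀ i, NM z v (σ i) i = ∑ b : Bool, (if b then z else 1) •
        xm i ((if b then -1 else 1) * v (σ i)) := by
      intro i; simp [NM, add_comm]
    simp_rw [h1]
    rw [Fintype.prod_sum]
    refine Finset.sum_congr rfl fun s _ => ?_
    rw [← prod_xm]
    simp_rw [zsmul_eq_mul]
    rw [Finset.prod_mul_distrib]
    congr 1
    rw [← Int.cast_prod, Finset.prod_ite]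
    simp
  rw [this, Units.smul_def, Finset.smul_sum]
  refine Finset.sum_congr rfl fun s _ => ?_
  rw [smul_smul]

lemma two_altY (v : Fin 4 → ℚ) : 2 * altY CType.D 4 v = (NM 1 v).det + (NM (-1) v).det := by
  rw [det_NM, det_NM, altY, Finset.mul_sum, ← Finset.sum_add_distrib]
  refine Finset.sum_congr rfl fun σ _ => ?_
  rw [Finset.mul_sum, ← Finset.sum_add_distrib]
  refine Finset.sum_congr rfl fun s _ => ?_
  by_cases h : Even (Finset.univ.filter (fun i => s i = true)).card
  · simp [h, h.neg_one_pow, two_mul]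
  · simp [h, (Nat.not_even_iff_odd.mp h).neg_one_pow]

/-- `x + x⁻¹` -/
def yy (c : Fin 4) : CharRing 4 := xm c 1 + xm c (-1)

lemma NM_rec (z : ℤ) (c : Fin 4) (t : ℚ) :
    xm c (t + 1) + z • xm c (-(t + 1)) =
      yy c * (xm c t + z • xm c (-t)) - (xm c (t - 1) + z • xm c (-(t - 1))) := by
  have e1 : yy c * xm c t = xm c (t + 1) + xm c (t - 1) := by
    rw [yy, add_mul, xm_mul, xm_mul]; congr 2 <;> ring
  have e2 : yy c * xm c (-t) = xm c (-(t - 1)) + xm c (-(t + 1)) := by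
    rw [yy, add_mul, xm_mul, xm_mul]; congr 2 <;> ring
  rw [mul_add, mul_smul_comm, e1, e2, smul_add]; abel

lemma poly_exists (z : ℤ) (t : ℚ) (h : Fin 4 → CharRing 4) (p0 p1 : Polynomial (CharRing 4))
    (h0 : ∀ c, xm c t + z • xm c (-t) = h c * p0.eval (yy c))
    (h1 : ∀ c, xm c (t + 1) + z • xm c (-(t + 1)) = h c * p1.eval (yy c)) (m : ℤ) :
    ∃ p q : Polynomial (CharRing 4),
      (∀ c, xm c (t + m) + z • xm c (-(t + m)) = h c * p.eval (yy c)) ∧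
      (∀ c, xm c (t + m + 1) + z • xm c (-(t + m + 1)) = h c * q.eval (yy c)) := by
  induction m using Int.induction_on with
  | zero => exact ⟨p0, p1, by simpa using h0, by simpa using h1⟩
  | succ i ih =>
    obtain ⟨p, q, hp, hq⟩ := ih
    refine ⟨q, Polynomial.X * q - p, fun c => ?_, fun c => ?_⟩
    · rw [← hq c]; push_cast; simp only [add_assoc]
    · have := NM_rec z c (t + (i : ℤ) + 1)
      rw [hq c, show t + (i : ℤ) + 1 - 1 = t + (i : ℤ) by ring, hp c] at this
      push_cast at this ⊢
      simp only [add_assoc] at this ⊢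
      rw [this]; simp; ring
  | pred i ih =>
    obtain ⟨p, q, hp, hq⟩ := ih
    refine ⟨Polynomial.X * p - q, p, fun c => ?_, fun c => ?_⟩
    · have := NM_rec z c (t + ((-(i : ℤ) : ℤ) : ℚ))
      rw [hq c, hp c] at this
      have e : t + ((-(i : ℤ) - 1 : ℤ) : ℚ) = t + ((-(i : ℤ) : ℤ) : ℚ) - 1 := by push_cast; ring
      rw [e]
      simp only [Polynomial.eval_sub, Polynomial.eval_mul, Polynomial.eval_X]
      linear_combination (1 : CharRing 4) * this
    · rw [← hp c]
      have e : t + ((-(i : ℤ) - 1 : ℤ) : ℚ) + 1 = t + ((-(i : ℤ) : ℤ) : ℚ) := by push_cast; ring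
      rw [e]

lemma det_dvd (z : ℤ) (v : Fin 4 → ℚ) (h : Fin 4 → CharRing 4)
    (p : Fin 4 → Polynomial (CharRing 4))
    (hp : ∀ r c, xm c (v r) + z • xm c (-(v r)) = h c * (p r).eval (yy c)) :
    (Matrix.vandermonde yy).det ∣ (NM z v).det := by
  let m : Polynomial (CharRing 4) := ∏ c, (Polynomial.X - Polynomial.C (yy c))
  have hm : m.Monic := Polynomial.monic_prod_of_monic _ _ fun c _ => Polynomial.monic_X_sub_C _
  have hd : m.natDegree = 4 := by
    simp only [m]; rw [Polynomial.natDegree_prod_of_monic _ _ fun c _ => Polynomial.monic_X_sub_C _]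
    simp
  have key : NM z v = (Matrix.of fun r k : Fin 4 => (p r %ₘ m).coeff k) *
      (Matrix.vandermonde yy).transpose * Matrix.diagonal h := by
    ext1 r c
    rw [Matrix.mul_diagonal, Matrix.mul_apply]
    simp only [NM, Matrix.of_apply, Matrix.transpose_apply, Matrix.vandermonde_apply]
    rw [hp, mul_comm]
    congr 1
    have hroot : Polynomial.eval (yy c) m = 0 := by
      simp only [m]; rw [Polynomial.eval_prod]
      exact Finset.prod_eq_zero (Finset.mem_univ c) (by simp)
    have := Polynomial.eval₂_modByMonic_eq_self_of_root (f := RingHom.id _) (p := p r) hroot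
    change Polynomial.eval _ _ = Polynomial.eval _ _ at this
    rw [← this, Polynomial.eval_eq_sum_range' (n := 4), Finset.sum_range]
    exact lt_of_lt_of_eq (Polynomial.natDegree_modByMonic_lt _ hm (by
      intro h1; have := hd; rw [h1] at this; simp at this)) hd
  rw [key, Matrix.det_mul, Matrix.det_mul, Matrix.det_transpose]
  exact Dvd.dvd.mul_right (Dvd.intro_left _ rfl) _

lemma det_dvd_int (z : ℤ) (hz : z = 1 ∨ z = -1) (v : Fin 4 → ℚ) (m : Fin 4 → ℤ)
    (hv : ∀ r, v r = m r) :
    (Matrix.vandermonde yy).det ∣ (NM z v).det := by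
  rcases hz with rfl | rfl
  · have := poly_exists 1 0 (fun _ => 1) 2 Polynomial.X
      (fun c => by simp [xm, mono_zero]; norm_num) (fun c => by simp [yy])
    choose p q hp hq using this
    exact det_dvd 1 v (fun _ => 1) (fun r => p (m r)) fun r c => by
      rw [← hp (m r) c, hv r, zero_add]
  · have := poly_exists (-1) 0 (fun c => xm c 1 - xm c (-1)) 0 1
      (fun c => by simp) (fun c => by simp [sub_eq_add_neg])
    choose p q hp hq using this
    exact det_dvd (-1) v _ (fun r => p (m r)) fun r c => by
      rw [← hp (m r) c, hv r, zero_add]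

lemma det_dvd_half (z : ℤ) (hz : z = 1 ∨ z = -1) (v : Fin 4 → ℚ) (m : Fin 4 → ℤ)
    (hv : ∀ r, v r = 1/2 + m r) :
    (Matrix.vandermonde yy).det ∣ (NM z v).det := by
  have := poly_exists z (1/2) (fun c => xm c (1/2) + z • xm c (-(1/2))) 1
      (Polynomial.X - Polynomial.C (z : CharRing 4))
      (fun c => by simp) (fun c => by
        have := NM_rec z c (1/2)
        rw [this]
        simp only [Polynomial.eval_sub, Polynomial.eval_X, Polynomial.eval_C]
        have e : xm c (1/2 - 1) + z • xm c (-(1/2 - 1)) =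
          (z : CharRing 4) * (xm c (1/2) + z • xm c (-(1/2))) := by
          have hzz : (z : CharRing 4) * z = 1 := by rcases hz with rfl | rfl <;> simp
          rw [mul_add, zsmul_eq_mul, zsmul_eq_mul, ← mul_assoc, hzz]
          norm_num [add_comm]
        rw [e]; ring)
  choose p q hp hq using this
  exact det_dvd z v _ (fun r => p (m r)) fun r c => by
      rw [← hp (m r) c, hv r]

lemma rho_eq : rhoY CType.D 4 = ![3, 2, 1, 0] := by
  ext i; fin_cases i <;> simp [rhoY] <;> norm_num

lemma altY_rho : altY CType.D 4 (rhoY CType.D 4) = (Matrix.vandermonde yy).det ∨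
    altY CType.D 4 (rhoY CType.D 4) = -(Matrix.vandermonde yy).det := by
  have h := two_altY (rhoY CType.D 4)
  have h0 : (NM (-1) (rhoY CType.D 4)).det = 0 := by
    apply Matrix.det_eq_zero_of_row_eq_zero 3
    intro c; simp [NM, rho_eq]
  have key : NM 1 (rhoY CType.D 4) = (Matrix.of
      ![![0, -3, 0, 1], ![-2, 0, 1, 0], ![0, 1, 0, 0], ![2, 0, 0, 0]]) *
      (Matrix.vandermonde yy).transpose := by
    ext1 r c
    have e0 : xm c 0 = 1 := by simp [xm, mono_zero]
    have e2 : xm c 2 = xm c 1 * xm c 1 := by rw [xm_mul]; norm_num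
    have e3 : xm c 3 = xm c 1 * xm c 1 * xm c 1 := by rw [xm_mul, xm_mul]; norm_num
    have f2 : xm c (-2) = xm c (-1) * xm c (-1) := by rw [xm_mul]; norm_num
    have f3 : xm c (-3) = xm c (-1) * xm c (-1) * xm c (-1) := by rw [xm_mul, xm_mul]; norm_num
    have hi : xm c 1 * xm c (-1) = 1 := by rw [xm_mul]; simp [e0]
    rw [Matrix.mul_apply, Fin.sum_univ_four]
    simp only [NM, Matrix.of_apply, Matrix.transpose_apply, Matrix.vandermonde_apply, rho_eq, yy]
    fin_cases r <;> simp [e0, e2, e3, f2, f3]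
    · linear_combination (-3 * (xm c 1 + xm c (-1))) * hi
    · linear_combination (-2) * hi
    · norm_num
  rw [h0, key, Matrix.det_mul, Matrix.det_transpose, add_zero] at h
  have hd : (Matrix.of ![![0, -3, 0, 1], ![-2, 0, 1, 0], ![0, 1, 0, 0], ![2, 0, 0, 0]] :
      Matrix (Fin 4) (Fin 4) (CharRing 4)).det = 2 := by
    simp [Matrix.det_succ_row_zero, Fin.sum_univ_succ, Fin.succAbove]; norm_num
  rw [hd] at h
  exact Or.inl (mul_left_cancel₀ two_ne h)

/-- reduction mod two -/
def red2 : CharRing 4 →+* AddMonoidAlgebra (ZMod 2) (Fin 4 → ℚ) :=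
  AddMonoidAlgebra.mapRingHom _ (Int.castRingHom (ZMod 2))

lemma red2_V : red2 (Matrix.vandermonde yy).det ≠ 0 := by
  rw [Matrix.det_vandermonde, map_prod, Finset.prod_ne_zero_iff]
  intro i _
  rw [map_prod, Finset.prod_ne_zero_iff]
  intro j hj
  have hij : i ≠ j := (Finset.mem_Ioi.mp hj).ne
  intro h
  have h2 := congrArg (fun x => x.coeff (Pi.single j (1:ℚ))) h
  have n1 : (Pi.single j (-1) : Fin 4 → ℚ) ≠ Pi.single j 1 := by
    intro h; have := congrFun h j; simp at this; norm_num at this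
  have n2 : ∀ t : ℚ, (Pi.single i t : Fin 4 → ℚ) ≠ Pi.single j 1 := by
    intro t h; have := congrFun h j; simp [hij.symm] at this
  simp only [red2, AddMonoidAlgebra.coeff_mapRingHom] at h2
  simp [yy, xm, coeff_mono, n1, n2] at h2

lemma red2_dvd (g : CharRing 4) (h : red2 g = 0) : ∃ g', g = 2 * g' := by
  refine ⟨AddMonoidAlgebra.ofCoeff (g.coeff.mapRange (fun n => n / 2) (by simp)), ?_⟩
  apply AddMonoidAlgebra.coeff_injective
  ext u
  have h2 := congrArg (fun x => x.coeff u) h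
  simp only [red2, AddMonoidAlgebra.coeff_mapRingHom] at h2
  have h3 : (2 : ℤ) ∣ g.coeff u := by
    have h4 : ((g.coeff u : ℤ) : ZMod 2) = 0 := by simpa using h2
    exact_mod_cast (ZMod.intCast_zmod_eq_zero_iff_dvd _ 2).mp h4
  rw [two_mul, AddMonoidAlgebra.coeff_add, Finsupp.add_apply]
  simp only [Finsupp.mapRange_apply]
  omega

/-- doubled coordinates of `lam + ρ` -/
def VV (a b c d : ℤ) : Fin 4 → ℤ :=
  ![2 * a + 2 * b + c + d + 6, 2 * b + c + d + 4, c + d + 2, d - c]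

lemma eps_val (lam : Fin 4 → ℕ) : epsWt CType.D 4 lam + rhoY CType.D 4 =
    fun i => (VV (lam 0) (lam 1) (lam 2) (lam 3) i : ℚ) / 2 := by
  ext i
  rw [Pi.add_apply, rho_eq]
  fin_cases i <;> simp [VV, epsWt, cval, Finset.sum_filter, Fin.sum_univ_four] <;> ring

lemma isCharY_exists (lam : Fin 4 → ℕ) : ∃ f, IsCharY CType.D 4 lam f := by
  set v := epsWt CType.D 4 lam + rhoY CType.D 4 with hv
  have hvv := eps_val lam
  rw [← hv] at hvv
  have e0 : v 0 = (2 * lam 0 + 2 * lam 1 + lam 2 + lam 3 + 6) / 2 := by rw [hvv]; simp [VV]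
  have e1 : v 1 = (2 * lam 1 + lam 2 + lam 3 + 4) / 2 := by rw [hvv]; simp [VV]
  have e2 : v 2 = (lam 2 + lam 3 + 2) / 2 := by rw [hvv]; simp [VV]
  have e3 : v 3 = (lam 3 - lam 2) / 2 := by rw [hvv]; simp [VV]
  have hdv : ∀ z : ℤ, z = 1 ∨ z = -1 → (Matrix.vandermonde yy).det ∣ (NM z v).det := by
    intro z hz
    rcases Nat.even_or_odd' (lam 2 + lam 3) with ⟨k, hk | hk⟩
    · have hk' : (lam 2 : ℚ) + lam 3 = 2 * k := by exact_mod_cast hk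
      apply det_dvd_int z hz v ![lam 0 + lam 1 + k + 3, lam 1 + k + 2, k + 1, k - lam 2]
      intro r
      fin_cases r
      · simp [e0]; linarith
      · simp [e1]; linarith
      · simp [e2]; linarith
      · simp [e3]; linarith
    · have hk' : (lam 2 : ℚ) + lam 3 = 2 * k + 1 := by exact_mod_cast hk
      apply det_dvd_half z hz v ![lam 0 + lam 1 + k + 3, lam 1 + k + 2, k + 1, k - lam 2]
      intro r
      fin_cases r
      · simp [e0]; linarith
      · simp [e1]; linarith
      · simp [e2]; linarith
      · simp [e3]; linarith
  obtain ⟨a, ha⟩ := hdv 1 (Or.inl rfl)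
  obtain ⟨b, hb⟩ := hdv (-1) (Or.inr rfl)
  have h2 := two_altY v
  rw [ha, hb, ← mul_add] at h2
  have hr : red2 (a + b) = 0 := by
    have := congrArg red2 h2
    rw [map_mul, map_mul] at this
    have h20 : red2 2 = 0 := by
      have : (2 : CharRing 4) = ((2 : ℤ) : CharRing 4) := by norm_num
      rw [this, map_intCast]
      have e : ((2 : ℤ) : AddMonoidAlgebra (ZMod 2) (Fin 4 → ℚ)) =
        AddMonoidAlgebra.single 0 ((2 : ℤ) : ZMod 2) := by
        rfl
      rw [e]
      have : ((2 : ℤ) : ZMod 2) = 0 := by decide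
      rw [this]; simp
    rw [h20, zero_mul] at this
    exact (mul_eq_zero.mp this.symm).resolve_left red2_V
  obtain ⟨g, hg⟩ := red2_dvd _ hr
  have h3 : altY CType.D 4 v = (Matrix.vandermonde yy).det * g := by
    rw [hg] at h2
    apply mul_left_cancel₀ two_ne
    rw [h2]; ring
  rcases altY_rho with h | h
  · exact ⟨g, by rw [IsCharY, h, h3]⟩
  · exact ⟨-g, by rw [IsCharY, h, h3]; ring⟩

end A2D4

namespace A2D4

/-- the lattice embedding, in doubled coordinates with respect to `β`, `α - β` -/
def emb (p q : ℤ) : Fin 3 → ℚ := ![(q : ℚ) / 2, (p : ℚ) / 2 - q, ((q : ℚ) - p) / 2]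

lemma emb_add (p q p' q' : ℤ) : emb p q + emb p' q' = emb (p + p') (q + q') := by
  ext i; fin_cases i <;> simp [emb] <;> ring

lemma emb_neg (p q : ℤ) : -emb p q = emb (-p) (-q) := by
  ext i; fin_cases i <;> simp [emb] <;> ring

lemma emb_inj {p q p' q' : ℤ} : emb p q = emb p' q' ↔ p = p' ∧ q = q' := by
  constructor
  · intro h
    have h0 := congrFun h 0
    have h2 := congrFun h 2
    simp [emb] at h0 h2
    subst h0
    refine ⟨?_, rfl⟩
    have : (p : ℚ) = p' := by linarith
    exact_mod_cast this
  · rintro ⟨rfl, rfl⟩; rfl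

/-- lists of terms -/
abbrev TL := List (ℤ × ℤ × ℤ)

/-- the element of the character ring described by a list of terms -/
def tl (l : TL) : CharRing 3 := (l.map fun t => t.1 • mono (emb t.2.1 t.2.2)).sum

lemma tl_nil : tl [] = 0 := rfl
lemma tl_cons (t : ℤ × ℤ × ℤ) (l : TL) :
    tl (t :: l) = t.1 • mono (emb t.2.1 t.2.2) + tl l := by simp [tl]
lemma tl_append (l l' : TL) : tl (l ++ l') = tl l + tl l' := by simp [tl]

lemma tl_flatMap {ι : Type*} (L : List ι) (g : ι → TL) :
    tl (L.flatMap g) = (L.map fun i => tl (g i)).sum := by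
  induction L with
  | nil => rfl
  | cons a L ih => simp [tl_append, ih]

/-- merging -/
def mrg : ℕ → TL → TL → TL
  | 0, a, b => a ++ b
  | _ + 1, [], b => b
  | _ + 1, x :: a, [] => x :: a
  | n + 1, x :: a, y :: b =>
    if x.2.1 = y.2.1 then
      if x.2.2 = y.2.2 then
        if x.1 + y.1 = 0 then mrg n a b else (x.1 + y.1, x.2) :: mrg n a b
      else if x.2.2 < y.2.2 then x :: mrg n a (y :: b) else y :: mrg n (x :: a) b
    else if x.2.1 < y.2.1 then x :: mrg n a (y :: b) else y :: mrg n (x :: a) b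

lemma tl_mrg (n : ℕ) : ∀ a b : TL, tl (mrg n a b) = tl a + tl b := by
  induction n with
  | zero => intro a b; rw [mrg, tl_append]
  | succ n ih =>
    intro a b
    match a, b with
    | [], b => rw [mrg, tl_nil, zero_add]
    | x :: a, [] => rw [mrg, tl_nil, add_zero]
    | x :: a, y :: b =>
      rw [mrg]
      split_ifs with h1 h2 h3 h4 h5
      · rw [ih, tl_cons, tl_cons, h1, h2]
        have : x.1 = -y.1 := by omega
        rw [this, neg_smul]; abel
      · rw [tl_cons, ih, tl_cons, tl_cons, ← h1, ← h2, add_smul]; abel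
      · rw [tl_cons, ih, tl_cons x a]; abel
      · rw [tl_cons, ih, tl_cons y b]; abel
      · rw [tl_cons, ih, tl_cons x a]; abel
      · rw [tl_cons, ih, tl_cons y b]; abel

/-- merge sort -/
def msort : ℕ → TL → TL
  | 0, l => l
  | n + 1, l => mrg 5000 (msort n (l.take (l.length / 2))) (msort n (l.drop (l.length / 2)))

lemma tl_msort (n : ℕ) : ∀ l : TL, tl (msort n l) = tl l := by
  induction n with
  | zero => intro l; rfl
  | succ n ih => intro l; rw [msort, tl_mrg, ih, ih, ← tl_append, List.take_append_drop]

/-- multiplication by `1 - e^{-b}` -/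
def mB (b : ℤ × ℤ) (l : TL) : TL :=
  mrg 5000 l (l.map fun t => (-t.1, t.2.1 - b.1, t.2.2 - b.2))

/-- the factor `1 - e^{-b}` -/
def fB (b : ℤ × ℤ) : CharRing 3 := 1 - mono (-(emb b.1 b.2))

lemma tl_mB (b : ℤ × ℤ) (l : TL) : tl (mB b l) = tl l * fB b := by
  rw [mB, tl_mrg, fB, mul_sub, mul_one, sub_eq_add_neg]
  congr 1
  induction l with
  | nil => simp [tl_nil]
  | cons t l ih =>
    rw [List.map_cons, tl_cons, ih, tl_cons, add_mul, smul_mul_assoc, mono_mul, emb_neg, emb_add]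
    rw [neg_smul, neg_add]
    simp only [sub_eq_add_neg]

/-- restricted positive roots of `D₄` minus positive roots of `A₂`, doubled coordinates -/
def bs : List (ℤ × ℤ) :=
  [(6, 4), (6, 2), (4, 2), (4, 2), (2, 2), (2, 2), (2, 0), (2, 0), (0, 2)]

/-- product of the factors -/
def QB (L : List (ℤ × ℤ)) : CharRing 3 := (L.map fB).prod

/-- multiplication by all the factors -/
def mQ : List (ℤ × ℤ) → TL → TL
  | [], l => l
  | b :: L, l => mQ L (mB b l)

lemma tl_mQ (L : List (ℤ × ℤ)) : ∀ l, tl (mQ L l) = tl l * QB L := by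
  induction L with
  | nil => intro l; simp [mQ, QB]
  | cons b L ih => intro l; rw [mQ, ih, tl_mB, mul_assoc]; simp [QB]

lemma fB_ne (b : ℤ × ℤ) (hb : b ≠ 0) : fB b ≠ 0 := by
  intro h
  rw [fB, ← mono_zero] at h
  have := congrArg (fun x => x.coeff 0) h
  have hz : emb 0 0 = 0 := by ext i; fin_cases i <;> simp [emb]
  have hn : -emb b.1 b.2 ≠ 0 := by
    rw [← hz, emb_neg]
    intro h
    rw [emb_inj] at h
    apply hb
    ext <;> simp <;> omega
  simp [coeff_mono, hn] at this

lemma QB_ne : QB bs ≠ 0 := by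
  intro h
  rw [QB, List.prod_eq_zero_iff] at h
  rw [List.mem_map] at h
  obtain ⟨b, hb, h0⟩ := h
  refine fB_ne b ?_ h0
  rintro rfl
  revert hb
  decide

/-- permutations: signs and the first three values -/
def wp : List (ℤ × Fin 4 × Fin 4 × Fin 4) :=
  [(1,0,1,2), (-1,0,1,3), (-1,0,2,1), (1,0,2,3), (1,0,3,1), (-1,0,3,2),
   (-1,1,0,2), (1,1,0,3), (1,1,2,0), (-1,1,2,3), (-1,1,3,0), (1,1,3,2),
   (1,2,0,1), (-1,2,0,3), (-1,2,1,0), (1,2,1,3), (1,2,3,0), (-1,2,3,1),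
   (-1,3,0,1), (1,3,0,2), (1,3,1,0), (-1,3,1,2), (-1,3,2,0), (1,3,2,1)]

/-- signs -/
def ws : List (ℤ × ℤ × ℤ) :=
  [(1,1,1), (1,1,-1), (1,-1,1), (1,-1,-1), (-1,1,1), (-1,1,-1), (-1,-1,1), (-1,-1,-1)]

set_option maxRecDepth 100000 in
lemma wp_eq : (Finset.univ : Finset (Equiv.Perm (Fin 4))).val.map
    (fun σ => (((Equiv.Perm.sign σ : ℤˣ) : ℤ), σ 0, σ 1, σ 2)) = (wp : Multiset _) := by
  decide +kernel

set_option maxRecDepth 100000 in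
lemma ws_eq : ((Finset.univ : Finset (Fin 4 → Bool)).filter
    (fun s => Even (Finset.univ.filter (fun i => s i = true)).card)).val.map
    (fun s => (((if s 0 then -1 else 1 : ℤ)), (if s 1 then -1 else 1 : ℤ),
      (if s 2 then -1 else 1 : ℤ))) = (ws : Multiset _) := by
  decide +kernel

lemma sum_of_map {α β M : Type*} [AddCommMonoid M] (s : Finset α) (g : α → β) (L : List β)
    (h : s.val.map g = (L : Multiset β)) (F : β → M) :
    ∑ a ∈ s, F (g a) = (L.map F).sum := by
  have h2 : s.val.map (fun a => F (g a)) = (s.val.map g).map F := by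
    rw [Multiset.map_map]; rfl
  rw [Finset.sum, h2, h]; simp

/-- the standard torus embedding -/
def w0 : Fin 4 → (Fin 3 → ℚ) := ![![1, 0, -1], ![1, -1, 0], ![0, 1, -1], 0]

/-- restriction as a ring homomorphism -/
def resHom (w : Fin 4 → (Fin 3 → ℚ)) : CharRing 4 →+* CharRing 3 :=
  AddMonoidAlgebra.mapDomainRingHom ℤ
    ({ toFun := fun v => ∑ i, v i • w i
       map_zero' := by simp
       map_add' := fun u v => by simp [add_smul, Finset.sum_add_distrib] } :
      (Fin 4 → ℚ) →+ (Fin 3 → ℚ))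

lemma resChar_eq (w : Fin 4 → (Fin 3 → ℚ)) (F : CharRing 4) : resChar w F = resHom w F := rfl

lemma resHom_mono (w : Fin 4 → (Fin 3 → ℚ)) (v : Fin 4 → ℚ) :
    resHom w (mono v) = mono (∑ i, v i • w i) := by
  rw [← resChar_eq, resChar, mono, AddMonoidAlgebra.mapDomain_single]; rfl

/-- the restricted term of a Weyl group element -/
def wt (V : Fin 4 → ℤ) (t : ℤ × Fin 4 × Fin 4 × Fin 4) (s : ℤ × ℤ × ℤ) : ℤ × ℤ × ℤ :=
  (t.1, 2 * (s.1 * V t.2.1) + s.2.1 * V t.2.2.1 + s.2.2 * V t.2.2.2,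
    s.1 * V t.2.1 + s.2.1 * V t.2.2.1)

/-- the terms of the restricted Weyl numerator -/
def BL (V : Fin 4 → ℤ) : TL := wp.flatMap fun t => ws.map fun s => wt V t s

lemma res_altY (V : Fin 4 → ℤ) :
    resHom w0 (altY CType.D 4 (fun i => (V i : ℚ) / 2)) = tl (BL V) := by
  rw [altY, map_sum, BL, tl_flatMap]
  rw [← sum_of_map _ _ _ wp_eq]
  refine Finset.sum_congr rfl fun σ _ => ?_
  have h1 : ∀ s : Fin 4 → Bool, (if CType.D = CType.D ∧
      ¬ Even (Finset.univ.filter (fun i => s i = true)).card then (0 : CharRing 4)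
      else (((Equiv.Perm.sign σ : ℤˣ) : ℤ) *
          (-1) ^ (Finset.univ.filter (fun i => s i = true)).card) •
      mono (fun i => (if s i then -1 else 1) * ((V (σ i) : ℚ) / 2))) =
      if Even (Finset.univ.filter (fun i => s i = true)).card then
        ((Equiv.Perm.sign σ : ℤˣ) : ℤ) •
      mono (fun i => (if s i then -1 else 1) * ((V (σ i) : ℚ) / 2)) else 0 := by
    intro s
    by_cases h : Even (Finset.univ.filter (fun i => s i = true)).card
    · simp [h, h.neg_one_pow]
    · simp [h]
  rw [Finset.sum_congr rfl (fun s _ => h1 s)]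
  rw [← Finset.sum_filter, map_sum]
  rw [tl, List.map_map, ← sum_of_map _ _ _ ws_eq]
  refine Finset.sum_congr rfl fun s _ => ?_
  rw [map_zsmul, resHom_mono]
  simp only [Function.comp, wt]
  congr 2
  ext i
  rw [Fin.sum_univ_four]
  cases s 0 <;> cases s 1 <;> cases s 2 <;> fin_cases i <;> simp [w0, emb] <;> ring

/-- the shift -/
def sh : CharRing 3 := mono (fun _ => 1)

/-- permutations of three letters -/
def ap : List (ℤ × Fin 3 × Fin 3) :=
  [(1,0,1), (-1,0,2), (-1,1,0), (1,1,2), (1,2,0), (-1,2,1)]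

lemma ap_eq : (Finset.univ : Finset (Equiv.Perm (Fin 3))).val.map
    (fun σ => (((Equiv.Perm.sign σ : ℤˣ) : ℤ), σ 0, σ 1)) = (ap : Multiset _) := by
  decide +kernel

/-- terms of the Weyl numerator of `A₂` at the weight `(m, n)` of the root lattice -/
def lA (m n : ℕ) : TL :=
  let x : Fin 3 → ℤ := ![(2 * m + n) / 3 + 1, ((n : ℤ) - m) / 3, -((m + 2 * n) / 3 + 1)]
  ap.map fun t => (t.1, 2 * (2 * x t.2.1 + x t.2.2), 2 * x t.2.1)

lemma slWt_val (μ : Fin 2 → ℕ) : slWt 2 μ =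
    ![((2 * μ 0 + μ 1 : ℕ) : ℚ) / 3, ((μ 1 : ℚ) - μ 0) / 3, -((μ 0 + 2 * μ 1 : ℕ) : ℚ) / 3] := by
  ext i
  fin_cases i <;> simp [slWt, partLift, Finset.sum_filter, Fin.sum_univ_two] <;> ring

lemma rhoA_val : rhoA 2 = ![2, 1, 0] := by
  ext i; fin_cases i <;> simp [rhoA]; norm_num

lemma altA_lA (m n : ℕ) (h : (m + 2 * n) % 3 = 0) :
    altA 2 (slWt 2 ![m, n] + rhoA 2) = sh * tl (lA m n) := by
  obtain ⟨k, hk⟩ : ∃ k : ℤ, (m : ℤ) + 2 * n = 3 * k := ⟨((m + 2 * n) / 3 : ℕ), by omega⟩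
  have hx : ∀ i, (slWt 2 ![m, n] + rhoA 2) i = 1 +
    ((![((2 * m + n) / 3 : ℤ) + 1, ((n : ℤ) - m) / 3, -(((m : ℤ) + 2 * n) / 3 + 1)] i : ℤ) : ℚ) := by
    intro i
    rw [Pi.add_apply, slWt_val, rhoA_val]
    have hk' : (m : ℚ) + 2 * n = 3 * k := by exact_mod_cast hk
    have a1 : ((2 * m + n) / 3 : ℤ) = 2 * k - n := by omega
    have a2 : ((n - m) / 3 : ℤ) = n - k := by omega
    have a3 : ((m + 2 * n) / 3 : ℤ) = k := by omega
    rw [a1, a2, a3]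
    fin_cases i <;> simp <;> linarith
  have hs : ∑ i, (![((2 * m + n) / 3 : ℤ) + 1, ((n : ℤ) - m) / 3,
      -(((m : ℤ) + 2 * n) / 3 + 1)] i : ℤ) = 0 := by
    rw [Fin.sum_univ_three]; simp; omega
  rw [lA, altA]
  generalize (![((2 * m + n) / 3 : ℤ) + 1, ((n : ℤ) - m) / 3,
      -(((m : ℤ) + 2 * n) / 3 + 1)] : Fin 3 → ℤ) = x at hx hs ⊢
  rw [tl, List.map_map, ← sum_of_map _ _ _ ap_eq, Finset.mul_sum]
  refine Finset.sum_congr rfl fun σ _ => ?_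
  have hσ : x (σ 0) + x (σ 1) + x (σ 2) = 0 := by
    rw [← hs, ← Equiv.sum_comp σ, Fin.sum_univ_three]
  have hσ' : (x (σ 2) : ℚ) = - x (σ 0) - x (σ 1) := by
    have : x (σ 2) = - x (σ 0) - x (σ 1) := by omega
    rw [this]; push_cast; ring
  simp only [Function.comp]
  rw [mul_smul_comm, sh, mono_mul]
  congr 2
  ext i
  rw [hx, Pi.add_apply]
  congr 1
  fin_cases i
  · simp [emb]
  · simp [emb]
  · simp [emb, hσ']; ring

lemma altA_rho : altA 2 (rhoA 2) = sh * tl (lA 0 0) := by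
  rw [← altA_lA 0 0 (by norm_num)]
  congr 1
  rw [slWt_val]
  ext i; fin_cases i <;> simp

/-- shifting a list -/
def shl (l : TL) : TL := l.map fun t => (t.1, t.2.1 + 14, t.2.2 + 8)

lemma tl_shl (l : TL) : tl (shl l) = tl l * mono (emb 14 8) := by
  induction l with
  | nil => simp [shl, tl_nil]
  | cons t l ih =>
    rw [tl_cons, add_mul, ← ih, smul_mul_assoc, mono_mul, emb_add]
    simp only [shl, List.map_cons, tl_cons]

/-- the ratio of the denominators -/
def QE : CharRing 3 := mono (emb 14 8) * QB bs

lemma mono_ne {k : ℕ} (v : Fin k → ℚ) : mono v ≠ 0 := by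
  intro h
  have := congrArg (fun x => x.coeff v) h
  simp [coeff_mono] at this

lemma QE_ne : QE ≠ 0 := mul_ne_zero (mono_ne _) QB_ne

/-- the computational check of a decomposition -/
def chk (a b c d : ℕ) (mus : List (ℕ × ℕ)) : Bool :=
  decide (msort 9 (BL (VV a b c d)) = mQ bs (shl (msort 7 (mus.flatMap fun m => lA m.1 m.2))))

lemma chk_spec (a b c d : ℕ) (mus : List (ℕ × ℕ)) (h : chk a b c d mus = true) :
    tl (BL (VV a b c d)) = (mus.map fun m => tl (lA m.1 m.2)).sum * QE := by
  rw [chk, decide_eq_true_eq] at h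
  have := congrArg tl h
  rw [tl_msort, tl_mQ, tl_shl, tl_msort, tl_flatMap, mul_assoc] at this
  exact this

end A2D4

namespace A2D4

/-- coefficient as an additive map -/
def cf {k : ℕ} (v : Fin k → ℚ) : CharRing k →+ ℤ where
  toFun x := x.coeff v
  map_zero' := rfl
  map_add' _ _ := rfl

lemma cf_mono {k : ℕ} (u v : Fin k → ℚ) : cf v (mono u) = if u = v then 1 else 0 :=
  coeff_mono u v

lemma sA (μ : Fin 2 → ℕ) : (slWt 2 μ + rhoA 2) 1 < (slWt 2 μ + rhoA 2) 0 ∧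
    (slWt 2 μ + rhoA 2) 2 < (slWt 2 μ + rhoA 2) 1 := by
  have h0 : (0 : ℚ) ≤ μ 0 := Nat.cast_nonneg _
  have h1 : (0 : ℚ) ≤ μ 1 := Nat.cast_nonneg _
  constructor <;> (simp [slWt_val, rhoA_val]; linarith)

lemma perm3 : ∀ σ : Equiv.Perm (Fin 3), σ 0 < σ 1 → σ 1 < σ 2 → σ = 1 := by decide +kernel

lemma sAnti (μ : Fin 2 → ℕ) : StrictAnti (slWt 2 μ + rhoA 2) := by
  obtain ⟨h1, h2⟩ := sA μ
  apply Fin.strictAnti_iff_succ_lt.mpr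
  intro i
  fin_cases i
  · exact h1
  · exact h2

lemma cf_altA (μ μ0 : Fin 2 → ℕ) : cf (slWt 2 μ0 + rhoA 2) (altA 2 (slWt 2 μ + rhoA 2)) =
    if μ = μ0 then 1 else 0 := by
  rw [altA, map_sum, Finset.sum_eq_single 1]
  · rw [map_zsmul, cf_mono]
    have : ((fun i => (slWt 2 μ + rhoA 2) ((1 : Equiv.Perm (Fin 3)) i)) = slWt 2 μ0 + rhoA 2)
        ↔ μ = μ0 := by
      constructor
      · intro h
        have h0 := congrFun h 0
        have h1 := congrFun h 1
        have h2 := congrFun h 2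
        simp [slWt_val, rhoA_val] at h0 h1 h2
        ext i
        fin_cases i
        · have : (μ 0 : ℚ) = μ0 0 := by linarith
          exact_mod_cast this
        · have : (μ 1 : ℚ) = μ0 1 := by linarith
          exact_mod_cast this
      · rintro rfl; rfl
    rw [if_congr this rfl rfl]; simp
  · intro σ _ hσ
    rw [map_zsmul, cf_mono, if_neg, smul_zero]
    intro h
    apply hσ
    have h1 := sA μ0
    rw [← h] at h1
    exact perm3 σ ((sAnti μ).lt_iff_gt.mp h1.1) ((sAnti μ).lt_iff_gt.mp h1.2)
  · intro h; exact absurd (Finset.mem_univ _) h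

lemma slWt_zero : slWt 2 (0 : Fin 2 → ℕ) = 0 := by
  rw [slWt_val]; ext i; fin_cases i <;> simp

lemma altA_rho_ne : altA 2 (rhoA 2) ≠ 0 := by
  intro h
  have := cf_altA 0 0
  rw [slWt_zero, zero_add, h] at this
  simp at this

/-- product of lists -/
def mulL (l l' : TL) : TL :=
  l.flatMap fun t => l'.map fun s => (t.1 * s.1, t.2.1 + s.2.1, t.2.2 + s.2.2)

lemma tl_mul (l l' : TL) : tl (mulL l l') = tl l * tl l' := by
  rw [mulL, tl_flatMap]
  induction l with
  | nil => simp [tl_nil]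
  | cons t l ih =>
    rw [List.map_cons, List.sum_cons, ih, tl_cons, add_mul]
    congr 1
    clear ih
    induction l' with
    | nil => simp [tl_nil]
    | cons s l' ih =>
      rw [List.map_cons, tl_cons, ih, tl_cons, mul_add, smul_mul_smul_comm, mono_mul, emb_add]

/-- weights of the natural module -/
def WL : TL := [(1, 4, 2), (1, -4, -2), (1, 2, 2), (1, -2, -2), (1, 2, 0), (1, -2, 0),
  (1, 0, 0), (1, 0, 0)]

lemma WL_eq : ∑ i, (mono (w0 i) + mono (-(w0 i))) = tl WL := by
  have h0 : w0 0 = emb 4 2 := by ext i; fin_cases i <;> simp [w0, emb] <;> norm_num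
  have h1 : w0 1 = emb 2 2 := by ext i; fin_cases i <;> simp [w0, emb] <;> norm_num
  have h2 : w0 2 = emb 2 0 := by ext i; fin_cases i <;> simp [w0, emb]
  have h3 : w0 3 = emb 0 0 := by ext i; fin_cases i <;> simp [w0, emb]
  rw [Fin.sum_univ_four, h0, h1, h2, h3]
  simp only [WL, tl_cons, tl_nil, emb_neg, one_smul, add_zero, neg_zero, add_assoc]

lemma WL_chk : msort 7 (mulL WL (lA 0 0)) = msort 7 (lA 1 1) := by decide +kernel

lemma e_eq : e 2 1 + e 2 2 = ![1, 1] := by decide +kernel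

lemma WtSys_iff (w : Fin 4 → (Fin 3 → ℚ)) : WtSys CType.D 4 2 (e 2 1 + e 2 2) w ↔
    ∑ i, (mono (w i) + mono (-(w i))) = ∑ i, (mono (w0 i) + mono (-(w0 i))) := by
  have h := congrArg tl WL_chk
  rw [tl_msort, tl_msort, tl_mul, ← WL_eq] at h
  have h' : (∑ i, (mono (w0 i) + mono (-(w0 i)))) * altA 2 (rhoA 2) =
      altA 2 (slWt 2 (e 2 1 + e 2 2) + rhoA 2) := by
    rw [e_eq, altA_lA 1 1 (by norm_num), ← h, altA_rho]; ring
  rw [WtSys, ← h', if_neg (by decide), add_zero]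
  constructor
  · intro hh; exact mul_right_cancel₀ altA_rho_ne hh
  · intro hh; rw [hh]

lemma w0_ne : ∀ l k : Fin 4, l ≠ k → w0 l ≠ w0 k ∧ -w0 l ≠ w0 k := by decide +kernel

/-- number of signs -/
def gg (u x : Fin 3 → ℚ) : ℤ := (if x = u then 1 else 0) + if -x = u then 1 else 0

lemma gg_nonneg (u x : Fin 3 → ℚ) : 0 ≤ gg u x := by
  rw [gg]; split_ifs <;> norm_num

lemma gg_self (u : Fin 3 → ℚ) : 1 ≤ gg u u := by
  rw [gg, if_pos rfl]; split_ifs <;> norm_num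

lemma gg_neg (u x : Fin 3 → ℚ) : gg u (-x) = gg u x := by
  rw [gg, gg, neg_neg, add_comm]

lemma cf_S (w : Fin 4 → (Fin 3 → ℚ)) (u : Fin 3 → ℚ) :
    cf u (∑ i, (mono (w i) + mono (-(w i)))) = ∑ i, gg u (w i) := by
  simp_rw [map_sum, map_add, cf_mono, gg]

lemma exists_perm (w : Fin 4 → (Fin 3 → ℚ)) (hw : WtSys CType.D 4 2 (e 2 1 + e 2 2) w) :
    ∃ κ : Equiv.Perm (Fin 4), ∀ i, w i = w0 (κ i) ∨ w i = -w0 (κ i) := by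
  rw [WtSys_iff] at hw
  have hc : ∀ u, ∑ i, gg u (w i) = ∑ i, gg u (w0 i) := by
    intro u; rw [← cf_S, ← cf_S, hw]
  have h1 : ∀ i, ∃ k, w i = w0 k ∨ w i = -w0 k := by
    intro i
    by_contra hcon
    push Not at hcon
    have a : ∑ k, gg (w i) (w0 k) = 0 := by
      apply Finset.sum_eq_zero
      intro k _
      rw [gg, if_neg (fun h => (hcon k).1 h.symm), if_neg (fun h => (hcon k).2 h.symm)]; rfl
    have b : gg (w i) (w i) ≤ ∑ j, gg (w i) (w j) :=
      Finset.single_le_sum (f := fun j => gg (w i) (w j)) (fun j _ => gg_nonneg _ _)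
        (Finset.mem_univ i)
    have := gg_self (w i)
    rw [hc] at b
    omega
  choose κ hκ using h1
  have hg : ∀ i, gg (w0 (κ i)) (w i) = gg (w0 (κ i)) (w0 (κ i)) := by
    intro i
    rcases hκ i with h | h
    · rw [h]
    · rw [h, gg_neg]
  have inj : Function.Injective κ := by
    intro i j hij
    by_contra hne
    have a : ∑ l, gg (w0 (κ i)) (w0 l) = gg (w0 (κ i)) (w0 (κ i)) := by
      apply Finset.sum_eq_single
      · intro l _ hl
        have := w0_ne l (κ i) hl
        rw [gg, if_neg this.1, if_neg this.2]; rfl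
      · intro h; exact absurd (Finset.mem_univ _) h
    have b : ∑ l ∈ {i, j}, gg (w0 (κ i)) (w l) ≤ ∑ l, gg (w0 (κ i)) (w l) :=
      Finset.sum_le_sum_of_subset_of_nonneg (Finset.subset_univ _)
        (fun l _ _ => gg_nonneg _ _)
    rw [Finset.sum_pair hne, hc, a, hg i] at b
    have c := hg j
    rw [← hij] at c
    rw [c] at b
    have := gg_self (w0 (κ i))
    omega
  exact ⟨Equiv.ofBijective κ (Finite.injective_iff_bijective.mp inj), hκ⟩

/-- restricted matrices -/
def MW (z : ℤ) (w : Fin 4 → (Fin 3 → ℚ)) (v : Fin 4 → ℚ) : Matrix (Fin 4) (Fin 4) (CharRing 3) :=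
  Matrix.of fun r c => mono (v r • w c) + z • mono (-(v r • w c))

lemma res_NM (z : ℤ) (w : Fin 4 → (Fin 3 → ℚ)) (v : Fin 4 → ℚ) :
    resHom w (NM z v).det = (MW z w v).det := by
  rw [RingHom.map_det]
  congr 1
  have hx : ∀ c t, resHom w (xm c t) = mono (t • w c) := by
    intro c t
    rw [xm, resHom_mono]
    congr 1
    rw [Finset.sum_eq_single c]
    · simp
    · intro b _ hb; simp [hb]
    · intro h; exact absurd (Finset.mem_univ _) h
  ext1 r c
  simp [NM, MW, hx]

lemma MW_neg (w : Fin 4 → (Fin 3 → ℚ)) (v : Fin 4 → ℚ) (c : Fin 4) (hc : w c = 0) :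
    (MW (-1) w v).det = 0 := by
  apply Matrix.det_eq_zero_of_column_eq_zero c
  intro i
  simp [MW, hc]

lemma res_perm (w : Fin 4 → (Fin 3 → ℚ)) (κ : Equiv.Perm (Fin 4))
    (hκ : ∀ i, w i = w0 (κ i) ∨ w i = -w0 (κ i)) (v : Fin 4 → ℚ) :
    resHom w (altY CType.D 4 v) =
      ((Equiv.Perm.sign κ : ℤˣ) : ℤ) • resHom w0 (altY CType.D 4 v) := by
  have h30 : w0 3 = 0 := by simp [w0]
  have h3 : w (κ.symm 3) = 0 := by
    have := hκ (κ.symm 3)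
    simpa [h30] using this
  have hM : MW 1 w v = (MW 1 w0 v).submatrix id κ := by
    ext1 r c
    rcases hκ c with h | h
    · simp [MW, h]
    · simp [MW, h, add_comm]
  have h1 := congrArg (resHom w) (two_altY v)
  have h2 := congrArg (resHom w0) (two_altY v)
  rw [map_add, map_mul, res_NM, res_NM, MW_neg w v _ h3, add_zero, hM, Matrix.det_permute',
    map_ofNat] at h1
  rw [map_add, map_mul, res_NM, res_NM, MW_neg w0 v 3 h30, add_zero, map_ofNat] at h2
  apply mul_left_cancel₀ two_ne
  rw [h1, ← h2, zsmul_eq_mul]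
  ring

lemma chk0 : chk 0 0 0 0 [(0, 0)] = true := by decide +kernel

lemma rho_half : rhoY CType.D 4 = fun i => (VV 0 0 0 0 i : ℚ) / 2 := by
  rw [rho_eq]; ext i; fin_cases i <;> simp [VV] <;> norm_num

lemma res_main (w : Fin 4 → (Fin 3 → ℚ)) (hw : WtSys CType.D 4 2 (e 2 1 + e 2 2) w)
    (lam : Fin 4 → ℕ) (f : CharRing 4) (hf : IsCharY CType.D 4 lam f) :
    resChar w f * altA 2 (rhoA 2) * QE =
      sh * tl (BL (VV (lam 0) (lam 1) (lam 2) (lam 3))) := by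
  obtain ⟨κ, hκ⟩ := exists_perm w hw
  rw [IsCharY, eps_val] at hf
  have h1 := congrArg (resHom w) hf
  rw [map_mul, res_perm w κ hκ, res_perm w κ hκ, res_altY, rho_half, res_altY] at h1
  have h0 := chk_spec 0 0 0 0 _ chk0
  simp only [Nat.cast_zero] at h0
  rw [h0] at h1
  simp only [List.map_cons, List.map_nil, List.sum_cons, List.sum_nil, add_zero] at h1
  rw [smul_mul_assoc] at h1
  have h2 : tl (lA 0 0) * QE * resHom w f = tl (BL (VV (lam 0) (lam 1) (lam 2) (lam 3))) := by
    rcases Int.units_eq_one_or (Equiv.Perm.sign κ) with h | h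
    · simpa [h] using h1
    · simpa [h] using h1
  rw [← h2, altA_rho, resChar_eq]
  ring

end A2D4

namespace A2D4

lemma mf_of_chk (lam : Fin 4 → ℕ) (mus : List (ℕ × ℕ)) (hn : mus.Nodup)
    (h3 : ∀ m ∈ mus, (m.1 + 2 * m.2) % 3 = 0)
    (hc : chk (lam 0) (lam 1) (lam 2) (lam 3) mus = true) :
    IsMFRes CType.D 4 2 (e 2 1 + e 2 2) lam := by
  classical
  intro w hw f hf
  have hm := res_main w hw lam f hf
  rw [chk_spec _ _ _ _ _ hc, ← mul_assoc] at hm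
  have hm' := mul_right_cancel₀ QE_ne hm
  let g : ℕ × ℕ → (Fin 2 → ℕ) := fun m => ![m.1, m.2]
  have hg : Function.Injective g := by
    intro m m' h
    have h0 := congrFun h 0
    have h1 := congrFun h 1
    simp [g] at h0 h1
    exact Prod.ext h0 h1
  let s : Finset (Fin 2 → ℕ) := (mus.map g).toFinset
  let c : (Fin 2 → ℕ) →₀ ℕ := Finsupp.onFinset s (fun μ => if μ ∈ s then 1 else 0) (by
    intro a ha; by_contra h; simp [h] at ha)
  refine ⟨c, ?_, ?_⟩
  · rw [Decomp, hm']
    rw [Finsupp.onFinset_sum _ (by intro a; simp)]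
    have : ∀ μ ∈ s, (((if μ ∈ s then 1 else 0 : ℕ) : ℕ) : ℤ) • altA 2 (slWt 2 μ + rhoA 2) =
        altA 2 (slWt 2 μ + rhoA 2) := by
      intro μ hμ; simp [hμ]
    rw [Finset.sum_congr rfl this, List.sum_toFinset _ (hn.map hg), List.map_map]
    clear this c s hm hm' hc hn
    induction mus with
    | nil => simp
    | cons m mus ih =>
      rw [List.map_cons, List.sum_cons, mul_add, ih (fun m' h' => h3 m' (List.mem_cons_of_mem _ h')),
        List.map_cons, List.sum_cons, ← altA_lA _ _ (h3 m List.mem_cons_self)]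
      rfl
  · intro μ
    simp only [c, Finsupp.onFinset_apply]
    split_ifs <;> simp

set_option maxRecDepth 100000 in
lemma mf_list (lam : Fin 4 → ℕ) (h : lam = e 4 2
        ∨ (∃ i j : ℕ, (i = 1 ∨ i = 3 ∨ i = 4) ∧ (j = 1 ∨ j = 3 ∨ j = 4) ∧ i ≠ j ∧
            lam = e 4 i + e 4 j)
        ∨ (∃ c i : ℕ, 1 ≤ c ∧ c ≤ 5 ∧ (i = 1 ∨ i = 3 ∨ i = 4) ∧ lam = c • e 4 i)) :
    IsMFRes CType.D 4 2 (e 2 1 + e 2 2) lam := by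
  rcases h with rfl | ⟨i, j, hi, hj, hij, rfl⟩ | ⟨c, i, hc1, hc5, hi, rfl⟩
  · exact mf_of_chk _ [(0,3),(1,1),(3,0)] (by decide) (by decide) (by decide +kernel)
  · have key : ∀ k : ℕ × ℕ, k ∈ ([(1,3),(1,4),(3,1),(3,4),(4,1),(4,3)] : List (ℕ × ℕ)) →
      chk ((e 4 k.1 + e 4 k.2) 0) ((e 4 k.1 + e 4 k.2) 1) ((e 4 k.1 + e 4 k.2) 2)
        ((e 4 k.1 + e 4 k.2) 3) [(0,0),(0,3),(1,1),(2,2),(3,0)] = true := by decide +kernel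
    refine mf_of_chk _ [(0,0),(0,3),(1,1),(2,2),(3,0)] (by decide) (by decide) (key (i, j) ?_)
    rcases hi with rfl | rfl | rfl <;> rcases hj with rfl | rfl | rfl <;> simp at hij ⊢
  · have key : ∀ i ∈ ([1, 3, 4] : List ℕ), ∀ p ∈ ([(1, [(1,1)]), (2, [(1,1),(2,2)]),
        (3, [(0,0),(0,3),(2,2),(3,0),(3,3)]), (4, [(1,1),(1,4),(2,2),(3,3),(4,1),(4,4)]),
        (5, [(1,1),(1,4),(2,2),(2,5),(3,3),(4,1),(4,4),(5,2),(5,5)])] : List (ℕ × List (ℕ × ℕ))),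
        p.2.Nodup ∧ (∀ m ∈ p.2, (m.1 + 2 * m.2) % 3 = 0) ∧
        chk ((p.1 • e 4 i) 0) ((p.1 • e 4 i) 1) ((p.1 • e 4 i) 2) ((p.1 • e 4 i) 3) p.2 = true := by
      decide +kernel
    have key2 := key i (by rcases hi with rfl | rfl | rfl <;> simp)
    interval_cases c
    · obtain ⟨a, b, c⟩ := key2 (1, _) (by simp; rfl)
      exact mf_of_chk _ _ a b c
    · obtain ⟨a, b, c⟩ := key2 (2, _) (by simp; rfl)
      exact mf_of_chk _ _ a b c
    · obtain ⟨a, b, c⟩ := key2 (3, _) (by simp; rfl)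
      exact mf_of_chk _ _ a b c
    · obtain ⟨a, b, c⟩ := key2 (4, _) (by simp; rfl)
      exact mf_of_chk _ _ a b c
    · obtain ⟨a, b, c⟩ := key2 (5, _) (by simp; rfl)
      exact mf_of_chk _ _ a b c

end A2D4

namespace A2D4

/-- summation along a ray -/
def go (F : ℤ → ℤ → ℤ) (b : ℤ × ℤ) : ℕ → ℤ → ℤ → ℤ
  | 0, _, _ => 0
  | n + 1, p, q => if p < 0 ∨ q < 0 then 0 else F p q + go F b n (p - b.1) (q - b.2)

/-- partition function -/
def PF : List (ℤ × ℤ) → ℤ → ℤ → ℤ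
  | [], p, q => if p = 0 ∧ q = 0 then 1 else 0
  | b :: L, p, q => go (PF L) b ((p + q).toNat + 1) p q

lemma go_out (F : ℤ → ℤ → ℤ) (b : ℤ × ℤ) (n : ℕ) (p q : ℤ) (h : p < 0 ∨ q < 0) :
    go F b n p q = 0 := by
  cases n with
  | zero => rfl
  | succ n => rw [go, if_pos h]

lemma PF_out (L : List (ℤ × ℤ)) (p q : ℤ) (h : p < 0 ∨ q < 0) : PF L p q = 0 := by
  cases L with
  | nil => rw [PF, if_neg (by omega)]
  | cons b L => rw [PF, go_out _ _ _ _ _ h]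

/-- good steps -/
def good (b : ℤ × ℤ) : Prop := 0 ≤ b.1 ∧ 0 ≤ b.2 ∧ 1 ≤ b.1 + b.2

lemma go_indep (F : ℤ → ℤ → ℤ) (b : ℤ × ℤ) (hb : good b) (n : ℕ) : ∀ (m : ℕ) (p q : ℤ),
    p + q < n → p + q < m → go F b n p q = go F b m p q := by
  induction n with
  | zero =>
    intro m p q h1 _
    have : p < 0 ∨ q < 0 := by push_cast at h1; omega
    rw [go_out _ _ _ _ _ this, go_out _ _ _ _ _ this]
  | succ n ih =>
    intro m p q h1 h2
    by_cases h : p < 0 ∨ q < 0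
    · rw [go_out _ _ _ _ _ h, go_out _ _ _ _ _ h]
    · obtain ⟨b1, b2, b3⟩ := hb
      cases m with
      | zero => push_cast at h2; omega
      | succ m =>
        rw [go, go, if_neg h, if_neg h, ih m] <;> push_cast at h1 h2 <;> omega

/-- difference operator -/
def Df (b : ℤ × ℤ) (φ : ℤ → ℤ → ℤ) : ℤ → ℤ → ℤ := fun p q => φ p q - φ (p - b.1) (q - b.2)

/-- iterated difference operator -/
def DL : List (ℤ × ℤ) → (ℤ → ℤ → ℤ) → (ℤ → ℤ → ℤ)
  | [], φ => φ
  | b :: L, φ => DL L (Df b φ)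

lemma Df_PF (b : ℤ × ℤ) (hb : good b) (L : List (ℤ × ℤ)) : Df b (PF (b :: L)) = PF L := by
  funext p q
  obtain ⟨b1, b2, b3⟩ := id hb
  rw [Df]
  by_cases h : p < 0 ∨ q < 0
  · rw [PF_out _ _ _ h, PF_out _ _ _ (by omega), PF_out _ _ _ h]; rfl
  · rw [PF, PF, go, if_neg h, go_indep (PF L) b hb _ ((p - b.1 + (q - b.2)).toNat + 1)]
    · ring
    · omega
    · omega

lemma DL_PF (L : List (ℤ × ℤ)) (hL : ∀ b ∈ L, good b) : DL L (PF L) = PF [] := by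
  induction L with
  | nil => rfl
  | cons b L ih =>
    rw [DL, Df_PF b (hL b List.mem_cons_self), ih fun b hb => hL b (List.mem_cons_of_mem _ hb)]

/-- bounded below -/
def bdd (φ : ℤ → ℤ → ℤ) : Prop := ∃ N : ℤ, ∀ p q, p + q < N → φ p q = 0

lemma bdd_Df (b : ℤ × ℤ) (hb : good b) (φ : ℤ → ℤ → ℤ) (h : bdd φ) : bdd (Df b φ) := by
  obtain ⟨N, h⟩ := h
  obtain ⟨b1, b2, b3⟩ := hb
  refine ⟨N, fun p q hpq => ?_⟩
  rw [Df, h p q hpq, h _ _ (by omega)]; rfl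

lemma Df_inj (b : ℤ × ℤ) (hb : good b) (φ ψ : ℤ → ℤ → ℤ) (h1 : bdd φ) (h2 : bdd ψ)
    (h : Df b φ = Df b ψ) : φ = ψ := by
  obtain ⟨N, h1⟩ := h1
  obtain ⟨M, h2⟩ := h2
  obtain ⟨b1, b2, b3⟩ := hb
  have key : ∀ n : ℕ, ∀ p q, p + q < min N M + n → φ p q = ψ p q := by
    intro n
    induction n with
    | zero => intro p q hpq; push_cast at hpq; rw [h1 p q (by omega), h2 p q (by omega)]
    | succ n ih =>
      intro p q hpq
      push_cast at hpq
      have a := congrFun (congrFun h p) q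
      have c := ih (p - b.1) (q - b.2) (by omega)
      rw [Df, Df, c] at a
      omega
  funext p q
  exact key ((p + q - min N M).toNat + 1) p q (by omega)

lemma DL_inj (L : List (ℤ × ℤ)) (hL : ∀ b ∈ L, good b) : ∀ (φ ψ : ℤ → ℤ → ℤ), bdd φ → bdd ψ →
    DL L φ = DL L ψ → φ = ψ := by
  induction L with
  | nil => intro φ ψ _ _ h; exact h
  | cons b L ih =>
    intro φ ψ h1 h2 h
    have hb := hL b List.mem_cons_self
    exact Df_inj b hb φ ψ h1 h2 (ih (fun b hb => hL b (List.mem_cons_of_mem _ hb)) _ _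
      (bdd_Df b hb _ h1) (bdd_Df b hb _ h2) h)

/-- superposition of translates -/
def sup (l : TL) (φ : ℤ → ℤ → ℤ) : ℤ → ℤ → ℤ := fun p q =>
  (l.map fun t => t.1 * φ (p - t.2.1) (q - t.2.2)).sum

lemma Df_sup (l : TL) (b : ℤ × ℤ) (φ : ℤ → ℤ → ℤ) : Df b (sup l φ) = sup l (Df b φ) := by
  funext p q
  simp only [Df, sup]
  induction l with
  | nil => simp
  | cons t l ih =>
    simp only [List.map_cons, List.sum_cons]
    rw [← ih, sub_right_comm p, sub_right_comm q]
    ring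

lemma DL_sup (l : TL) (L : List (ℤ × ℤ)) : ∀ φ, DL L (sup l φ) = sup l (DL L φ) := by
  induction L with
  | nil => intro φ; rfl
  | cons b L ih => intro φ; rw [DL, Df_sup, ih, DL]

lemma bdd_sup (l : TL) (φ : ℤ → ℤ → ℤ) (h : ∀ p q, p + q < 0 → φ p q = 0) : bdd (sup l φ) := by
  induction l with
  | nil => exact ⟨0, fun p q _ => rfl⟩
  | cons t l ih =>
    obtain ⟨N, hN⟩ := ih
    refine ⟨min N (t.2.1 + t.2.2), fun p q hpq => ?_⟩
    have := hN p q (by omega)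
    simp only [sup] at this
    simp only [sup, List.map_cons, List.sum_cons]
    rw [this, h _ _ (by omega)]; ring

/-- coefficients in lattice coordinates -/
def ph (P Q : ℤ) (X : CharRing 3) : ℤ → ℤ → ℤ := fun p q => cf (1 + emb (P - p) (Q - q)) X

lemma cf_mul_mono {k : ℕ} (X : CharRing k) (u v : Fin k → ℚ) :
    cf v (X * mono u) = cf (v - u) X := by
  change (X * AddMonoidAlgebra.single u 1).coeff v = X.coeff (v - u)
  rw [AddMonoidAlgebra.coeff_mul_single_eq_coeff_mul (v - u), mul_one]
  intro m _
  exact eq_sub_iff_add_eq.symm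

lemma ph_fB (P Q : ℤ) (X : CharRing 3) (b : ℤ × ℤ) : ph P Q (X * fB b) = Df b (ph P Q X) := by
  funext p q
  simp only [ph, Df, fB]
  rw [mul_sub, mul_one, map_sub, cf_mul_mono, sub_neg_eq_add, add_assoc, emb_add]
  congr 4 <;> ring

lemma ph_QB (P Q : ℤ) (L : List (ℤ × ℤ)) : ∀ X, ph P Q (X * QB L) = DL L (ph P Q X) := by
  induction L with
  | nil => intro X; simp [QB, DL]
  | cons b L ih =>
    intro X
    rw [DL, ← ph_fB, ← ih]
    congr 1
    simp [QB, mul_assoc]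

lemma bdd_ph (P Q : ℤ) (X : CharRing 3) : bdd (ph P Q X) := by
  obtain ⟨N, hN⟩ : ∃ N : ℤ, ∀ v ∈ X.coeff.support, 2 * v 1 + 6 * v 0 ≤ N := by
    obtain ⟨M, hM⟩ := (X.coeff.support.image fun v => 2 * v 1 + 6 * v 0).finite_toSet.bddAbove
    obtain ⟨N, hN⟩ := exists_nat_ge M
    refine ⟨N, fun v hv => ?_⟩
    have := hM (Finset.mem_coe.mpr (Finset.mem_image_of_mem _ hv))
    push_cast
    linarith
  refine ⟨P + Q - N, fun p q hpq => ?_⟩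
  by_contra hne
  have := hN (1 + emb (P - p) (Q - q)) (Finsupp.mem_support_iff.mpr hne)
  simp [emb] at this
  have h2 : ((p + q : ℤ) : ℚ) < ((P + Q - N : ℤ) : ℚ) := by exact_mod_cast hpq
  push_cast at h2
  linarith

lemma ph_tl (P Q : ℤ) (l : TL) : ph P Q (sh * tl l) =
    sup (l.map fun t => (t.1, P - t.2.1, Q - t.2.2)) (PF []) := by
  funext p q
  simp only [ph, sup, List.map_map]
  induction l with
  | nil => simp [tl_nil]
  | cons t l ih =>
    rw [tl_cons, mul_add, map_add, ih, List.map_cons, List.sum_cons]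
    congr 1
    rw [mul_smul_comm, sh, mono_mul, map_zsmul, cf_mono]
    simp only [Function.comp, PF, smul_eq_mul]
    congr 1
    apply if_congr _ rfl rfl
    rw [show (fun _ : Fin 3 => (1 : ℚ)) = 1 from rfl, add_right_inj, emb_inj]
    omega

lemma bs_good : ∀ b ∈ bs, good b := by
  simp only [good]; decide

/-- displacement list -/
def dl (V : Fin 4 → ℤ) : TL :=
  (BL V).map fun t => (t.1, 2 * V 0 + V 1 + V 2 - t.2.1, V 0 + V 1 - t.2.2)

lemma ph_main (V : Fin 4 → ℤ) (H : CharRing 3) (h : H * QB bs = sh * tl (BL V)) :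
    ph (2 * V 0 + V 1 + V 2) (V 0 + V 1) H = sup (dl V) (PF bs) := by
  apply DL_inj bs bs_good _ _ (bdd_ph _ _ _) (bdd_sup _ _ fun p q hpq => PF_out _ _ _ (by omega))
  rw [← ph_QB, h, ph_tl, DL_sup, DL_PF bs bs_good]; rfl

/-- the multiplicity -/
def mult (a b c d : ℤ) (p q : ℤ) : ℤ := sup (dl (VV a b c d)) (PF bs) p q

lemma decomp_mult (lam : Fin 4 → ℕ) (f : CharRing 4) (hf : IsCharY CType.D 4 lam f)
    (c : (Fin 2 → ℕ) →₀ ℕ) (hc : Decomp 2 (resChar w0 f) c) (p q : ℤ) (μ : Fin 2 → ℕ)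
    (h0 : (μ 0 : ℤ) = lam 0 + lam 2 + lam 3 + 3 * lam 1 + p - 3 * q)
    (h1 : (μ 1 : ℤ) = lam 0 + lam 2 + lam 3 - 2 * p + 3 * q) :
    (c μ : ℤ) = mult (lam 0) (lam 1) (lam 2) (lam 3) (2 * p) (2 * q) := by
  classical
  have hm := res_main w0 ((WtSys_iff w0).mpr rfl) lam f hf
  rw [QE, ← mul_assoc] at hm
  have hp := ph_main _ _ hm
  rw [mult, ← hp, ph, cf_mul_mono, hc]
  have hμ : (1 : Fin 3 → ℚ) + emb (2 * VV (lam 0) (lam 1) (lam 2) (lam 3) 0 +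
      VV (lam 0) (lam 1) (lam 2) (lam 3) 1 + VV (lam 0) (lam 1) (lam 2) (lam 3) 2 - 2 * p)
      (VV (lam 0) (lam 1) (lam 2) (lam 3) 0 + VV (lam 0) (lam 1) (lam 2) (lam 3) 1 - 2 * q) -
      emb 14 8 = slWt 2 μ + rhoA 2 := by
    have h0' : (μ 0 : ℚ) = lam 0 + lam 2 + lam 3 + 3 * lam 1 + p - 3 * q := by exact_mod_cast h0
    have h1' : (μ 1 : ℚ) = lam 0 + lam 2 + lam 3 - 2 * p + 3 * q := by exact_mod_cast h1
    rw [slWt_val, rhoA_val]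
    ext i
    fin_cases i <;> simp [emb, VV, h0', h1', Matrix.vecHead, Matrix.vecTail] <;> ring
  rw [hμ, Finsupp.sum, map_sum]
  simp_rw [map_zsmul, cf_altA]
  simp

/-- the basic displacement vectors -/
def Vi (i : Fin 4) : Fin 4 → ℤ :=
  (![![2, 0, 0, 0], ![2, 2, 0, 0], ![1, 1, 1, -1], ![1, 1, 1, 1]] : Fin 4 → Fin 4 → ℤ) i

/-- displacement in the first coordinate -/
def Dp (V : Fin 4 → ℤ) (t : ℤ × Fin 4 × Fin 4 × Fin 4) (s : ℤ × ℤ × ℤ) : ℤ :=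
  2 * V 0 + V 1 + V 2 - (wt V t s).2.1

/-- displacement in the second coordinate -/
def Dq (V : Fin 4 → ℤ) (t : ℤ × Fin 4 × Fin 4 × Fin 4) (s : ℤ × ℤ × ℤ) : ℤ :=
  V 0 + V 1 - (wt V t s).2.2

lemma D_tab : ∀ t ∈ wp, ∀ s ∈ ws, ∀ i, (Dp (Vi i) t s = 0 ∨ 2 ≤ Dp (Vi i) t s) ∧
    (Dq (Vi i) t s = 0 ∨ 2 ≤ Dq (Vi i) t s) := by decide +kernel

lemma VV_lin (a b c d : ℤ) (j : Fin 4) : VV a b c d j =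
    (a + 1) * Vi 0 j + (b + 1) * Vi 1 j + (c + 1) * Vi 2 j + (d + 1) * Vi 3 j := by
  fin_cases j <;> simp [VV, Vi] <;> ring

lemma Dp_lin (a b c d : ℤ) (t : ℤ × Fin 4 × Fin 4 × Fin 4) (s : ℤ × ℤ × ℤ) :
    Dp (VV a b c d) t s = (a + 1) * Dp (Vi 0) t s + (b + 1) * Dp (Vi 1) t s +
      (c + 1) * Dp (Vi 2) t s + (d + 1) * Dp (Vi 3) t s := by
  simp only [Dp, wt, VV_lin]; ring

lemma Dq_lin (a b c d : ℤ) (t : ℤ × Fin 4 × Fin 4 × Fin 4) (s : ℤ × ℤ × ℤ) :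
    Dq (VV a b c d) t s = (a + 1) * Dq (Vi 0) t s + (b + 1) * Dq (Vi 1) t s +
      (c + 1) * Dq (Vi 2) t s + (d + 1) * Dq (Vi 3) t s := by
  simp only [Dq, wt, VV_lin]; ring

lemma trunc1 (a N : ℕ) (D : ℤ) (hD : D = 0 ∨ 2 ≤ D) :
    0 ≤ (((min a N : ℕ) : ℤ) + 1) * D ∧ (((min a N : ℕ) : ℤ) + 1) * D ≤ (a + 1) * D ∧
    ((a + 1) * D = (((min a N : ℕ) : ℤ) + 1) * D ∨ 2 * (N : ℤ) < (((min a N : ℕ) : ℤ) + 1) * D) := by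
  rcases hD with rfl | hD
  · simp
  · have h1 : ((min a N : ℕ) : ℤ) ≤ a := by exact_mod_cast min_le_left a N
    refine ⟨by positivity, by nlinarith, ?_⟩
    by_cases h : a ≤ N
    · left; rw [min_eq_left h]
    · right; rw [min_eq_right (by omega)]; nlinarith

lemma dl_eq (V : Fin 4 → ℤ) :
    dl V = wp.flatMap fun t => ws.map fun s => (t.1, Dp V t s, Dq V t s) := by
  simp only [dl, BL, List.map_flatMap, List.map_map]
  rfl

lemma mult_trunc (a b c d N : ℕ) (p q : ℤ) (hp : p ≤ 2 * N) (hq : q ≤ 2 * N) :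
    mult a b c d p q =
      mult (min a N : ℕ) (min b N : ℕ) (min c N : ℕ) (min d N : ℕ) p q := by
  simp only [mult, sup, dl_eq, List.map_flatMap, List.map_map]
  refine congrArg List.sum (List.flatMap_congr fun t ht => List.map_congr_left fun s hs => ?_)
  simp only [Function.comp]
  refine congrArg (t.1 * ·) ?_
  have T := D_tab t ht s hs
  have hP : Dp (VV a b c d) t s =
      Dp (VV (min a N : ℕ) (min b N : ℕ) (min c N : ℕ) (min d N : ℕ)) t s ∨
      (2 * (N : ℤ) < Dp (VV a b c d) t s ∧ 2 * (N : ℤ) <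
      Dp (VV (min a N : ℕ) (min b N : ℕ) (min c N : ℕ) (min d N : ℕ)) t s) := by
    rw [Dp_lin, Dp_lin]
    have h0 := trunc1 a N _ (T 0).1
    have h1 := trunc1 b N _ (T 1).1
    have h2 := trunc1 c N _ (T 2).1
    have h3 := trunc1 d N _ (T 3).1
    generalize (((min a N : ℕ) : ℤ) + 1) * Dp (Vi 0) t s = x0 at *
    generalize (((min b N : ℕ) : ℤ) + 1) * Dp (Vi 1) t s = x1 at *
    generalize (((min c N : ℕ) : ℤ) + 1) * Dp (Vi 2) t s = x2 at *
    generalize (((min d N : ℕ) : ℤ) + 1) * Dp (Vi 3) t s = x3 at *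
    generalize ((a : ℤ) + 1) * Dp (Vi 0) t s = y0 at *
    generalize ((b : ℤ) + 1) * Dp (Vi 1) t s = y1 at *
    generalize ((c : ℤ) + 1) * Dp (Vi 2) t s = y2 at *
    generalize ((d : ℤ) + 1) * Dp (Vi 3) t s = y3 at *
    omega
  have hQ : Dq (VV a b c d) t s =
      Dq (VV (min a N : ℕ) (min b N : ℕ) (min c N : ℕ) (min d N : ℕ)) t s ∨
      (2 * (N : ℤ) < Dq (VV a b c d) t s ∧ 2 * (N : ℤ) <
      Dq (VV (min a N : ℕ) (min b N : ℕ) (min c N : ℕ) (min d N : ℕ)) t s) := by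
    rw [Dq_lin, Dq_lin]
    have h0 := trunc1 a N _ (T 0).2
    have h1 := trunc1 b N _ (T 1).2
    have h2 := trunc1 c N _ (T 2).2
    have h3 := trunc1 d N _ (T 3).2
    generalize (((min a N : ℕ) : ℤ) + 1) * Dq (Vi 0) t s = x0 at *
    generalize (((min b N : ℕ) : ℤ) + 1) * Dq (Vi 1) t s = x1 at *
    generalize (((min c N : ℕ) : ℤ) + 1) * Dq (Vi 2) t s = x2 at *
    generalize (((min d N : ℕ) : ℤ) + 1) * Dq (Vi 3) t s = x3 at *
    generalize ((a : ℤ) + 1) * Dq (Vi 0) t s = y0 at *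
    generalize ((b : ℤ) + 1) * Dq (Vi 1) t s = y1 at *
    generalize ((c : ℤ) + 1) * Dq (Vi 2) t s = y2 at *
    generalize ((d : ℤ) + 1) * Dq (Vi 3) t s = y3 at *
    omega
  rcases hP with hP | ⟨hP1, hP2⟩
  · rcases hQ with hQ | ⟨hQ1, hQ2⟩
    · rw [hP, hQ]
    · rw [PF_out _ _ _ (by omega), PF_out _ _ _ (by omega)]
  · rw [PF_out _ _ _ (by omega), PF_out _ _ _ (by omega)]

lemma nonMF (lam : Fin 4 → ℕ) (p q m n : ℕ) (N : ℕ) (hp : p ≤ N) (hq : q ≤ N)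
    (h0 : (m : ℤ) = lam 0 + lam 2 + lam 3 + 3 * lam 1 + p - 3 * q)
    (h1 : (n : ℤ) = lam 0 + lam 2 + lam 3 - 2 * p + 3 * q)
    (h : 2 ≤ mult (min (lam 0) N : ℕ) (min (lam 1) N : ℕ) (min (lam 2) N : ℕ)
      (min (lam 3) N : ℕ) (2 * p) (2 * q)) :
    ¬ IsMFRes CType.D 4 2 (e 2 1 + e 2 2) lam := by
  intro hMF
  obtain ⟨f, hf⟩ := isCharY_exists lam
  obtain ⟨c, hc, hc1⟩ := hMF w0 ((WtSys_iff w0).mpr rfl) f hf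
  have := decomp_mult lam f hf c hc p q ![m, n] h0 h1
  rw [mult_trunc _ _ _ _ N _ _ (by omega) (by omega)] at this
  have := hc1 ![m, n]
  omega

end A2D4

namespace A2D4
set_option maxRecDepth 100000

lemma tA : ∀ a < 2, ∀ c < 2, ∀ d < 2, 1 ≤ a + c + d →
    2 ≤ mult (a : ℕ) (1 : ℕ) (c : ℕ) (d : ℕ) (2 * (1 : ℕ)) (2 * (1 : ℕ)) := by decide +kernel

lemma tB : 2 ≤ mult (0 : ℕ) (2 : ℕ) (0 : ℕ) (0 : ℕ) (2 * (2 : ℕ)) (2 * (2 : ℕ)) := by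
  decide +kernel

lemma tC : 2 ≤ mult (1 : ℕ) (0 : ℕ) (1 : ℕ) (1 : ℕ) (2 * (1 : ℕ)) (2 * (0 : ℕ)) := by
  decide +kernel

set_option synthInstance.maxSize 2000 in
set_option synthInstance.maxHeartbeats 400000 in
lemma tD : ∀ a < 3, ∀ c < 3, ∀ d < 3, ((a = 0 ∨ c = 0 ∨ d = 0) ∧
    (1 ≤ a ∧ 1 ≤ c ∨ 1 ≤ a ∧ 1 ≤ d ∨ 1 ≤ c ∧ 1 ≤ d) ∧ (2 ≤ a ∨ 2 ≤ c ∨ 2 ≤ d)) →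
    2 ≤ mult (a : ℕ) (0 : ℕ) (c : ℕ) (d : ℕ) (2 * (2 : ℕ)) (2 * (1 : ℕ)) := by decide +kernel

lemma tE : 2 ≤ mult (6 : ℕ) (0 : ℕ) (0 : ℕ) (0 : ℕ) (2 * (6 : ℕ)) (2 * (3 : ℕ)) ∧
    2 ≤ mult (0 : ℕ) (0 : ℕ) (6 : ℕ) (0 : ℕ) (2 * (6 : ℕ)) (2 * (3 : ℕ)) ∧
    2 ≤ mult (0 : ℕ) (0 : ℕ) (0 : ℕ) (6 : ℕ) (2 * (6 : ℕ)) (2 * (3 : ℕ)) := by decide +kernel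

lemma notMF_A (lam : Fin 4 → ℕ) (hb : 1 ≤ lam 1) (hn : 1 ≤ lam 0 + lam 2 + lam 3) :
    ¬ IsMFRes CType.D 4 2 (e 2 1 + e 2 2) lam := by
  refine nonMF lam 1 1 (lam 0 + lam 2 + lam 3 + 3 * lam 1 - 2) (lam 0 + lam 2 + lam 3 + 1) 1
    le_rfl le_rfl (by omega) (by omega) ?_
  rw [min_eq_right hb]
  exact tA _ (by omega) _ (by omega) _ (by omega) (by omega)

lemma notMF_B (lam : Fin 4 → ℕ) (hb : 2 ≤ lam 1) (h0 : lam 0 = 0) (h2 : lam 2 = 0)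
    (h3 : lam 3 = 0) : ¬ IsMFRes CType.D 4 2 (e 2 1 + e 2 2) lam := by
  refine nonMF lam 2 2 (3 * lam 1 - 4) 2 2 le_rfl le_rfl (by omega) (by omega) ?_
  rw [min_eq_right hb, h0, h2, h3]
  exact tB

lemma notMF_C (lam : Fin 4 → ℕ) (hb : lam 1 = 0) (h0 : 1 ≤ lam 0) (h2 : 1 ≤ lam 2)
    (h3 : 1 ≤ lam 3) : ¬ IsMFRes CType.D 4 2 (e 2 1 + e 2 2) lam := by
  refine nonMF lam 1 0 (lam 0 + lam 2 + lam 3 + 1) (lam 0 + lam 2 + lam 3 - 2) 1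
    le_rfl zero_le_one (by omega) (by omega) ?_
  rw [min_eq_right h0, min_eq_right h2, min_eq_right h3, hb]
  exact tC

lemma notMF_D (lam : Fin 4 → ℕ) (hb : lam 1 = 0) (h0 : lam 0 = 0 ∨ lam 2 = 0 ∨ lam 3 = 0)
    (h1 : 1 ≤ lam 0 ∧ 1 ≤ lam 2 ∨ 1 ≤ lam 0 ∧ 1 ≤ lam 3 ∨ 1 ≤ lam 2 ∧ 1 ≤ lam 3)
    (h2 : 2 ≤ lam 0 ∨ 2 ≤ lam 2 ∨ 2 ≤ lam 3) :
    ¬ IsMFRes CType.D 4 2 (e 2 1 + e 2 2) lam := by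
  refine nonMF lam 2 1 (lam 0 + lam 2 + lam 3 - 1) (lam 0 + lam 2 + lam 3 - 1) 2
    le_rfl one_le_two (by omega) (by omega) ?_
  rw [hb]
  exact tD _ (by omega) _ (by omega) _ (by omega) (by omega)

lemma notMF_E (lam : Fin 4 → ℕ) (hb : lam 1 = 0)
    (h : 6 ≤ lam 0 ∧ lam 2 = 0 ∧ lam 3 = 0 ∨ lam 0 = 0 ∧ 6 ≤ lam 2 ∧ lam 3 = 0 ∨
      lam 0 = 0 ∧ lam 2 = 0 ∧ 6 ≤ lam 3) :
    ¬ IsMFRes CType.D 4 2 (e 2 1 + e 2 2) lam := by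
  refine nonMF lam 6 3 (lam 0 + lam 2 + lam 3 - 3) (lam 0 + lam 2 + lam 3 - 3) 6
    le_rfl (by norm_num) (by omega) (by omega) ?_
  rcases h with ⟨h0, h2, h3⟩ | ⟨h0, h2, h3⟩ | ⟨h0, h2, h3⟩
  · rw [hb, h2, h3, min_eq_right h0]; exact tE.1
  · rw [hb, h0, h3, min_eq_right h2]; exact tE.2.1
  · rw [hb, h0, h2, min_eq_right h3]; exact tE.2.2

lemma lam_eq (lam μ : Fin 4 → ℕ) (h0 : lam 0 = μ 0) (h1 : lam 1 = μ 1) (h2 : lam 2 = μ 2)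
    (h3 : lam 3 = μ 3) : lam = μ := by
  funext i; fin_cases i <;> assumption

lemma mf_imp (lam : Fin 4 → ℕ) (hlam0 : lam ≠ 0)
    (h : IsMFRes CType.D 4 2 (e 2 1 + e 2 2) lam) : lam = e 4 2
        ∨ (∃ i j : ℕ, (i = 1 ∨ i = 3 ∨ i = 4) ∧ (j = 1 ∨ j = 3 ∨ j = 4) ∧ i ≠ j ∧
            lam = e 4 i + e 4 j)
        ∨ (∃ c i : ℕ, 1 ≤ c ∧ c ≤ 5 ∧ (i = 1 ∨ i = 3 ∨ i = 4) ∧ lam = c • e 4 i) := by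
  have hA : ¬ (1 ≤ lam 1 ∧ 1 ≤ lam 0 + lam 2 + lam 3) := fun hh => notMF_A lam hh.1 hh.2 h
  have hB : ¬ (2 ≤ lam 1 ∧ lam 0 = 0 ∧ lam 2 = 0 ∧ lam 3 = 0) := fun hh =>
    notMF_B lam hh.1 hh.2.1 hh.2.2.1 hh.2.2.2 h
  have hC : ¬ (lam 1 = 0 ∧ 1 ≤ lam 0 ∧ 1 ≤ lam 2 ∧ 1 ≤ lam 3) := fun hh =>
    notMF_C lam hh.1 hh.2.1 hh.2.2.1 hh.2.2.2 h
  have hD : ¬ (lam 1 = 0 ∧ (lam 0 = 0 ∨ lam 2 = 0 ∨ lam 3 = 0) ∧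
      (1 ≤ lam 0 ∧ 1 ≤ lam 2 ∨ 1 ≤ lam 0 ∧ 1 ≤ lam 3 ∨ 1 ≤ lam 2 ∧ 1 ≤ lam 3) ∧
      (2 ≤ lam 0 ∨ 2 ≤ lam 2 ∨ 2 ≤ lam 3)) := fun hh =>
    notMF_D lam hh.1 hh.2.1 hh.2.2.1 hh.2.2.2 h
  have hE : ¬ (lam 1 = 0 ∧ (6 ≤ lam 0 ∧ lam 2 = 0 ∧ lam 3 = 0 ∨
      lam 0 = 0 ∧ 6 ≤ lam 2 ∧ lam 3 = 0 ∨ lam 0 = 0 ∧ lam 2 = 0 ∧ 6 ≤ lam 3)) := fun hh =>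
    notMF_E lam hh.1 hh.2 h
  have hz : ¬ (lam 0 = 0 ∧ lam 1 = 0 ∧ lam 2 = 0 ∧ lam 3 = 0) := fun hh =>
    hlam0 (lam_eq _ _ hh.1 hh.2.1 hh.2.2.1 hh.2.2.2)
  have cases8 : (lam 0 = 0 ∧ lam 1 = 1 ∧ lam 2 = 0 ∧ lam 3 = 0) ∨
      (lam 0 = 1 ∧ lam 1 = 0 ∧ lam 2 = 1 ∧ lam 3 = 0) ∨
      (lam 0 = 1 ∧ lam 1 = 0 ∧ lam 2 = 0 ∧ lam 3 = 1) ∨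
      (lam 0 = 0 ∧ lam 1 = 0 ∧ lam 2 = 1 ∧ lam 3 = 1) ∨
      (1 ≤ lam 0 ∧ lam 0 ≤ 5 ∧ lam 1 = 0 ∧ lam 2 = 0 ∧ lam 3 = 0) ∨
      (1 ≤ lam 2 ∧ lam 2 ≤ 5 ∧ lam 1 = 0 ∧ lam 0 = 0 ∧ lam 3 = 0) ∨
      (1 ≤ lam 3 ∧ lam 3 ≤ 5 ∧ lam 1 = 0 ∧ lam 0 = 0 ∧ lam 2 = 0) := by
    clear h hlam0
    generalize lam 0 = a at *
    generalize lam 1 = b at *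
    generalize lam 2 = c at *
    generalize lam 3 = d at *
    rcases Nat.eq_zero_or_pos b with hb | hb
    · clear hA hB
      by_cases h0 : a = 0 <;> by_cases h2 : c = 0 <;>
        by_cases h3 : d = 0 <;>
        simp [hb, h0, h2, h3, Nat.one_le_iff_ne_zero] at hC hD hE hz ⊢ <;>
        omega
    · clear hC hD hE
      have hs : a = 0 ∧ c = 0 ∧ d = 0 := by clear hB hz; omega
      obtain ⟨rfl, rfl, rfl⟩ := hs
      left
      simp at hB
      omega
  rcases cases8 with ⟨h0, h1, h2, h3⟩ | ⟨h0, h1, h2, h3⟩ | ⟨h0, h1, h2, h3⟩ | ⟨h0, h1, h2, h3⟩ |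
    ⟨a, b, h1, h2, h3⟩ | ⟨a, b, h1, h0, h3⟩ | ⟨a, b, h1, h0, h2⟩
  · exact Or.inl (lam_eq _ _ h0 h1 h2 h3)
  · exact Or.inr (Or.inl ⟨1, 3, by simp, by simp, by simp, lam_eq _ _ h0 h1 h2 h3⟩)
  · exact Or.inr (Or.inl ⟨1, 4, by simp, by simp, by simp, lam_eq _ _ h0 h1 h2 h3⟩)
  · exact Or.inr (Or.inl ⟨3, 4, by simp, by simp, by simp, lam_eq _ _ h0 h1 h2 h3⟩)
  · refine Or.inr (Or.inr ⟨lam 0, 1, a, b, by simp, lam_eq _ _ ?_ ?_ ?_ ?_⟩) <;> simp [e, h1, h2, h3]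
  · refine Or.inr (Or.inr ⟨lam 2, 3, a, b, by simp, lam_eq _ _ ?_ ?_ ?_ ?_⟩) <;> simp [e, h1, h0, h3]
  · refine Or.inr (Or.inr ⟨lam 3, 4, a, b, by simp, lam_eq _ _ ?_ ?_ ?_ ?_⟩) <;> simp [e, h1, h0, h2]

end A2D4

/-- **Proposition 5.2.**  Let `X = A₂ < Y = D₄` via the 8-dimensional adjoint
representation `δ = ω₁ + ω₂ = (1,1)`.  Let `lam` be a dominant weight for `Y` with
`lam ∉ {0, λ₁, λ₃, λ₄}`.  Then, up to a twist by an automorphism of `D₄` (triality,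
which permutes `λ₁, λ₃, λ₄` and fixes `λ₂`), `V_Y(lam)↓X` is multiplicity-free
if and only if `lam = λ₂`, `λ₁+λ₄`, or `cλ₁` with `1 ≤ c ≤ 5`;
i.e. `V_Y(lam)↓X` is MF iff `lam` lies in the triality orbit of these weights. -/
theorem thm_A2_in_D4 (lam : Fin 4 → ℕ)
    (hlam0 : lam ≠ 0) (hlam1 : lam ≠ e 4 1) (hlam3 : lam ≠ e 4 3) (hlam4 : lam ≠ e 4 4) :
    IsMFRes CType.D 4 2 (e 2 1 + e 2 2) lam ↔
      (lam = e 4 2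
        ∨ (∃ i j : ℕ, (i = 1 ∨ i = 3 ∨ i = 4) ∧ (j = 1 ∨ j = 3 ∨ j = 4) ∧ i ≠ j ∧
            lam = e 4 i + e 4 j)
        ∨ (∃ c i : ℕ, 1 ≤ c ∧ c ≤ 5 ∧ (i = 1 ∨ i = 3 ∨ i = 4) ∧ lam = c • e 4 i)) := by
  exact ⟨A2D4.mf_imp lam hlam0, A2D4.mf_list lam⟩
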